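/- arXiv:1312.1714 — 2 statements merged into one kernel-verified Lean document; each statement's English description precedes it below -/
import Mathlib

section
/- Fix an integer n ≥ 2. There exists a constant C > 0, independent of p and Λ, such that for every prime p and every positive definite matrix Λ ∈ M_{n,n}(ℤ) with p ∤ det(Λ), one has ν_p(I_{n+1}, Λ) ≤ 1 + C/p². -/
open scoped ENNReal

/-- `ν_p(I_{n+1}, Λ)`: the limit superior, as `r → ∞`, of
`p^{-r(mn - n(n+1)/2)}` (with `m = n+1`, so the exponent is `r·n(n+1)/2`) times the
number of matrices `L ∈ M_{m,n}(ℤ/p^rℤ)` with `Lᵀ L ≡ Λ (mod p^r)`. -/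
noncomputable def nuId (p n : ℕ) (Λ : Matrix (Fin n) (Fin n) ℤ) : ℝ≥0∞ :=
  Filter.limsup (fun r : ℕ =>
    (Nat.card {L : Matrix (Fin (n + 1)) (Fin n) (ZMod (p ^ r)) //
        L.transpose * L = Λ.map (Int.cast : ℤ → ZMod (p ^ r))} : ℝ≥0∞) /
      (p : ℝ≥0∞) ^ (r * ((n + 1) * n - n * (n + 1) / 2))) Filter.atTop

/-- The number of solutions of `f x = c`. -/
noncomputable def fiberCard {X F : Type*} (f : X → F) (c : F) : ℕ := Nat.card {x // f x = c}

theorem fiberCard_congr {X Y F : Type*} {f : X → F} {g : Y → F} (e : X ≃ Y)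
    (h : ∀ x, g (e x) = f x) (c : F) : fiberCard f c = fiberCard g c :=
  Nat.card_congr (e.subtypeEquiv fun x => by rw [h])

theorem sum_fiberCard {X F : Type*} [Finite X] [Fintype F] (f : X → F) :
    ∑ c, fiberCard f c = Nat.card X := by
  simp only [fiberCard]
  rw [← Nat.card_sigma]
  exact Nat.card_congr (Equiv.sigmaFiberEquiv f)

theorem fiberCard_add {X Y F : Type*} [Finite X] [Fintype Y] [AddCommGroup F] (g : X → F)
    (h : Y → F) (c : F) :
    fiberCard (fun z : X × Y => g z.1 + h z.2) c = ∑ y, fiberCard g (c - h y) := by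
  simp only [fiberCard]
  rw [← Nat.card_sigma]
  exact Nat.card_congr
    { toFun := fun z => ⟨z.1.2, z.1.1, eq_sub_of_add_eq z.2⟩
      invFun := fun z => ⟨(z.2.1, z.1), by simp [z.2.2]⟩
      left_inv := fun _ => rfl
      right_inv := fun _ => rfl }

theorem fiberCard_sq_zero {F : Type*} [Field F] {a : F} (ha : a ≠ 0) :
    fiberCard (fun y : F => a * y ^ 2) 0 = 1 := by
  rw [fiberCard, Nat.card_eq_one_iff_unique]
  refine ⟨⟨fun x y => ?_⟩, ⟨0, by simp⟩⟩
  have hx := x.2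
  have hy := y.2
  simp only [mul_eq_zero, ha, false_or, pow_eq_zero_iff, ne_eq, OfNat.ofNat_ne_zero,
    not_false_eq_true] at hx hy
  exact Subtype.ext (hx.trans hy.symm)

section Field

variable {F : Type*} [Field F] [Fintype F]

theorem fiberCard_sq_le_two {a : F} (ha : a ≠ 0) (c : F) :
    fiberCard (fun y : F => a * y ^ 2) c ≤ 2 := by
  classical
  rw [fiberCard]
  by_cases h : ∃ y, a * y ^ 2 = c
  · obtain ⟨y, hy⟩ := h
    have hsub : {x | a * x ^ 2 = c} ⊆ (({y, -y} : Finset F) : Set F) := by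
      intro x hx
      have : x ^ 2 = y ^ 2 := mul_left_cancel₀ ha (hx.trans hy.symm)
      simpa using sq_eq_sq_iff_eq_or_eq_neg.1 this
    calc Nat.card {x | a * x ^ 2 = c} ≤ Nat.card (({y, -y} : Finset F) : Set F) :=
          Nat.card_mono (Finset.finite_toSet _) hsub
      _ ≤ 2 := by simpa using Finset.card_le_two
  · push Not at h
    have : IsEmpty {x // a * x ^ 2 = c} := ⟨fun x => h x.1 x.2⟩
    simp

theorem exists_sq_add_mul_sq (h2 : (2 : F) ≠ 0) {b : F} (hb : b ≠ 0) (c : F) :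
    ∃ u v : F, u ^ 2 + b * v ^ 2 = c := by
  have hodd : Fintype.card F % 2 = 1 := FiniteField.odd_card_of_char_ne_two fun h => h2 <| by
    have := CharP.cast_eq_zero F (ringChar F)
    rw [h] at this
    exact_mod_cast this
  obtain ⟨u, v, h⟩ := FiniteField.exists_root_sum_quadratic
    (f := (Polynomial.X ^ 2 : Polynomial F))
    (g := Polynomial.C b * Polynomial.X ^ 2 + Polynomial.C 0 * Polynomial.X + Polynomial.C (-c))
    (Polynomial.degree_X_pow 2) (Polynomial.degree_quadratic hb) hodd
  simp only [Polynomial.eval_pow, Polynomial.eval_X, Polynomial.eval_add, Polynomial.eval_mul,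
    Polynomial.eval_C] at h
  exact ⟨u, v, by linear_combination h⟩

theorem fiberCard_binary_le_mul (h2 : (2 : F) ≠ 0) {a b c : F} (ha : a ≠ 0) (hb : b ≠ 0)
    (hc : c ≠ 0) (d : F) :
    fiberCard (fun z : F × F => a * z.1 ^ 2 + b * z.2 ^ 2) d ≤
      fiberCard (fun z : F × F => a * z.1 ^ 2 + b * z.2 ^ 2) (c * d) := by
  obtain ⟨e, rfl⟩ : ∃ e, b = a * e := ⟨b / a, by field_simp⟩
  obtain ⟨u, v, huv⟩ := exists_sq_add_mul_sq h2 (right_ne_zero_of_mul hb) c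
  refine Nat.card_le_card_of_injective
    (fun z => ⟨(u * z.1.1 - e * v * z.1.2, v * z.1.1 + u * z.1.2), ?_⟩) ?_
  · have hz := z.2
    simp only at hz ⊢
    linear_combination c * hz + (a * z.1.1 ^ 2 + a * e * z.1.2 ^ 2) * huv
  · rintro ⟨⟨x, y⟩, hz⟩ ⟨⟨x', y'⟩, hz'⟩ h
    simp only [Subtype.mk.injEq, Prod.mk.injEq] at h ⊢
    obtain ⟨h₁, h₂⟩ := h
    have e₁ : c * (x - x') = 0 := by
      rw [← huv]; linear_combination u * h₁ + e * v * h₂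
    have e₂ : c * (y - y') = 0 := by
      rw [← huv]; linear_combination u * h₂ - v * h₁
    simp only [mul_eq_zero, hc, false_or, sub_eq_zero] at e₁ e₂
    exact ⟨e₁, e₂⟩

/-- The number of representations of `c` by a nondegenerate binary quadratic form. -/
theorem exists_fiberCard_binary (h2 : (2 : F) ≠ 0) {a b : F} (ha : a ≠ 0) (hb : b ≠ 0) :
    ∃ ε : ℤ, |ε| ≤ 1 ∧ ∀ c, (fiberCard (fun z : F × F => a * z.1 ^ 2 + b * z.2 ^ 2) c : ℤ) =
      Fintype.card F - ε + Fintype.card F * ε * fiberCard (fun _ : Unit => (0 : F)) c := by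
  classical
  set S := fiberCard (fun z : F × F => a * z.1 ^ 2 + b * z.2 ^ 2) with hS
  set q := (Fintype.card F : ℤ) with hq
  have hconst : ∀ c, c ≠ 0 → S c = S 1 := fun c hc => by
    refine le_antisymm ?_ ?_
    · simpa [inv_mul_cancel₀ hc] using fiberCard_binary_le_mul h2 ha hb (inv_ne_zero hc) c
    · simpa using fiberCard_binary_le_mul h2 ha hb hc 1
  have htot : (S 0 : ℤ) + (q - 1) * S 1 = q ^ 2 := by
    have h := sum_fiberCard (fun z : F × F => a * z.1 ^ 2 + b * z.2 ^ 2)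
    rw [← Finset.add_sum_erase _ _ (Finset.mem_univ (0 : F)),
      Finset.sum_congr rfl fun c hc => hconst c (Finset.ne_of_mem_erase hc)] at h
    simp only [Finset.sum_const, Finset.card_erase_of_mem (Finset.mem_univ _), Finset.card_univ,
      Nat.card_eq_fintype_card, Fintype.card_prod, smul_eq_mul] at h
    have h' := congrArg (Nat.cast : ℕ → ℤ) h
    push_cast [Nat.cast_sub Fintype.card_pos] at h'
    rw [← hS] at h'
    linear_combination h'
  have hlow : 1 ≤ S 0 := by
    have : Nonempty {z : F × F // a * z.1 ^ 2 + b * z.2 ^ 2 = 0} := ⟨0, by simp⟩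
    exact Nat.card_pos
  have hup : (S 0 : ℤ) ≤ 2 * q - 1 := by
    have h := fiberCard_add (fun x : F => a * x ^ 2) (fun x : F => b * x ^ 2) 0
    rw [← hS, ← Finset.add_sum_erase _ _ (Finset.mem_univ (0 : F))] at h
    have hle := Finset.sum_le_card_nsmul (Finset.univ.erase (0 : F))
      (fun y => fiberCard (fun x : F => a * x ^ 2) (0 - b * y ^ 2)) 2
      fun y _ => fiberCard_sq_le_two ha _
    simp only [Finset.card_erase_of_mem (Finset.mem_univ _), Finset.card_univ, smul_eq_mul] at hle
    have h0 : fiberCard (fun x : F => a * x ^ 2) (0 - b * 0 ^ 2) = 1 := by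
      simpa using fiberCard_sq_zero ha
    rw [h0] at h
    have : 1 ≤ Fintype.card F := Fintype.card_pos
    omega
  have hq2 : 2 ≤ q := by
    have := Fintype.one_lt_card (α := F)
    omega
  refine ⟨q - S 1, ?_, fun c => ?_⟩
  · rw [abs_le]
    constructor <;> nlinarith
  · by_cases hc : c = 0
    · subst hc
      have : fiberCard (fun _ : Unit => (0 : F)) 0 = 1 := by simp [fiberCard]
      rw [this]
      push_cast
      linear_combination htot
    · have : fiberCard (fun _ : Unit => (0 : F)) c = 0 := by
        have : IsEmpty {x : Unit // (0 : F) = c} := ⟨fun x => hc x.2.symm⟩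
        simp [fiberCard]
      rw [this, hconst c hc]
      push_cast
      ring

theorem fiberCard_binary_add (h2 : (2 : F) ≠ 0) {a b : F} (ha : a ≠ 0) (hb : b ≠ 0) :
    ∃ ε : ℤ, |ε| ≤ 1 ∧ ∀ {Y : Type} [Fintype Y] (h : Y → F) (c : F),
      (fiberCard (fun z : (F × F) × Y => a * z.1.1 ^ 2 + b * z.1.2 ^ 2 + h z.2) c : ℤ) =
        Fintype.card Y * (Fintype.card F - ε) + Fintype.card F * ε * fiberCard h c := by
  obtain ⟨ε, hε, h⟩ := exists_fiberCard_binary h2 ha hb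
  refine ⟨ε, hε, fun {Y} _ f c => ?_⟩
  have h1 := fiberCard_add (fun z : F × F => a * z.1 ^ 2 + b * z.2 ^ 2) f c
  have h3 := fiberCard_add (fun _ : Unit => (0 : F)) f c
  rw [fiberCard_congr (Equiv.punitProd Y) (g := f) (fun x => by simp)] at h3
  rw [h1, h3]
  push_cast
  simp only [h, Finset.sum_add_distrib, Finset.sum_const, Finset.card_univ, nsmul_eq_mul,
    Finset.mul_sum]

end Field

section FieldZero

variable {F : Type} [Field F] [Fintype F]

/-- The number of representations of a nonzero `d` by a nondegenerate diagonal form in `k + 1`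
variables differs from `q ^ k` by at most `q ^ (k / 2)`. -/
theorem abs_fiberCard_diagonal_sub_le (h2 : (2 : F) ≠ 0) (k : ℕ) (w : Fin (k + 1) → F)
    (hw : ∀ i, w i ≠ 0) {d : F} (hd : d ≠ 0) :
    |(fiberCard (fun x : Fin (k + 1) → F => ∑ i, w i * x i ^ 2) d : ℤ) - Fintype.card F ^ k| ≤
      Fintype.card F ^ (k / 2) := by
  classical
  induction k using Nat.twoStepInduction with
  | zero =>
    have h := fiberCard_congr (Equiv.funUnique (Fin 1) F)
      (f := fun x : Fin (0 + 1) → F => ∑ i, w i * x i ^ 2) (g := fun y => w 0 * y ^ 2)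
      (fun x => by simp) d
    have := fiberCard_sq_le_two (hw 0) d
    rw [← h] at this
    simp only [pow_zero, Nat.zero_div]
    rw [abs_le]
    omega
  | one =>
    have h := fiberCard_congr (finTwoArrowEquiv F)
      (f := fun x : Fin (1 + 1) → F => ∑ i, w i * x i ^ 2)
      (g := fun z : F × F => w 0 * z.1 ^ 2 + w 1 * z.2 ^ 2)
      (fun x => by simp [Fin.sum_univ_two]) d
    obtain ⟨ε, hε, hb⟩ := exists_fiberCard_binary h2 (hw 0) (hw 1)
    have h0 : fiberCard (fun _ : Unit => (0 : F)) d = 0 := by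
      have : IsEmpty {x : Unit // (0 : F) = d} := ⟨fun x => hd x.2.symm⟩
      simp [fiberCard]
    have hb := hb d
    rw [← h, h0] at hb
    rw [hb, abs_le]
    rw [abs_le] at hε
    norm_num
    omega
  | more k ih _ =>
    have ih := ih (fun i => w i.succ.succ) fun i => hw _
    let e : (Fin (k + 3) → F) ≃ (F × F) × (Fin (k + 1) → F) :=
      (Fin.consEquiv fun _ => F).symm.trans
        (((Equiv.refl F).prodCongr (Fin.consEquiv fun _ => F).symm).trans
          (Equiv.prodAssoc _ _ _).symm)
    have h := fiberCard_congr e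
      (f := fun x : Fin (k + 2 + 1) → F => ∑ i, w i * x i ^ 2)
      (g := fun z => w 0 * z.1.1 ^ 2 + w 1 * z.1.2 ^ 2 +
        ∑ i : Fin (k + 1), w i.succ.succ * z.2 i ^ 2)
      (fun x => by
        simp [e, Fin.sum_univ_succ (n := k + 2), Fin.sum_univ_succ (n := k + 1), Fin.consEquiv,
          Fin.tail, add_assoc]) d
    obtain ⟨ε, hε, hb⟩ := fiberCard_binary_add h2 (hw 0) (hw 1)
    rw [h, hb (fun x : Fin (k + 1) → F => ∑ i, w i.succ.succ * x i ^ 2)]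
    have e1 : (k + 2) / 2 = k / 2 + 1 := by omega
    rw [e1, pow_succ]
    simp only [Fintype.card_fun, Fintype.card_fin, Nat.cast_pow]
    set q := (Fintype.card F : ℤ)
    set S := (fiberCard (fun x : Fin (k + 1) → F => ∑ i, w i.succ.succ * x i ^ 2) d : ℤ)
    rw [show q ^ (k + 1) * (q - ε) + q * ε * S - q ^ (k + 1) * q = (ε * (S - q ^ k)) * q by ring,
      abs_mul, abs_mul]
    have hq : |q| = q := abs_of_nonneg (by positivity)
    rw [hq]
    have : |ε| * |S - q ^ k| ≤ 1 * q ^ (k / 2) :=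
      mul_le_mul hε ih (abs_nonneg _) zero_le_one
    rw [pow_succ]
    exact mul_le_mul_of_nonneg_right (by simpa using this) (hq ▸ abs_nonneg q)

end FieldZero

section BilinForm

open LinearMap.BilinForm Module

variable {F : Type} [Field F] {V : Type} [AddCommGroup V] [Module F V]

theorem exists_diagonal_equiv [FiniteDimensional F V] (h2 : (2 : F) ≠ 0)
    {B : LinearMap.BilinForm F V} (hs : B.IsSymm)
    (hB : B.Nondegenerate) {k : ℕ} (hk : finrank F V = k) :
    ∃ (w : Fin k → F) (e : V ≃ (Fin k → F)), (∀ i, w i ≠ 0) ∧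
      ∀ x, ∑ i, w i * e x i ^ 2 = B x x := by
  subst hk
  have : Invertible (2 : F) := invertibleOfNonzero h2
  obtain ⟨v, hv⟩ := exists_orthogonal_basis (B := B) ⟨fun x y => hs.eq x y⟩
  refine ⟨fun i => B (v i) (v i), v.equivFun.toEquiv,
    hv.not_isOrtho_basis_self_of_separatingLeft hB.1, fun x => ?_⟩
  conv_rhs => rw [← v.sum_equivFun x]
  simp only [map_sum, LinearMap.sum_apply, map_smul, LinearMap.smul_apply, smul_eq_mul]
  refine Finset.sum_congr rfl fun i _ => ?_
  rw [Finset.sum_eq_single i]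
  · simp only [LinearEquiv.coe_toEquiv]; ring
  · intro j _ hj
    have : B (v i) (v j) = 0 := hv hj.symm
    have : B (v j) (v i) = 0 := hv hj
    simp [*]
  · simp

theorem finrank_orthogonal_span_singleton_add_one [FiniteDimensional F V]
    {B : LinearMap.BilinForm F V}
    {x : V} (hx : B x x ≠ 0) : finrank F (B.orthogonal (F ∙ x)) + 1 = finrank F V := by
  have hx0 : x ≠ 0 := fun h => hx (by simp [h])
  have := Submodule.finrank_add_eq_of_isCompl (isCompl_span_singleton_orthogonal hx)
  rw [finrank_span_singleton hx0] at this
  omega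

/-- The number of families `l` in `V` whose Gram matrix for `B` is `diagonal d`. -/
noncomputable def frameCard (B : LinearMap.BilinForm F V) {n : ℕ} (d : Fin n → F) : ℕ :=
  Nat.card {l : Fin n → V // ∀ i j, B (l i) (l j) = Matrix.diagonal d i j}

theorem frameCard_one (B : LinearMap.BilinForm F V) (d : Fin 1 → F) :
    frameCard B d = fiberCard (fun x => B x x) (d 0) :=
  Nat.card_congr ((Equiv.funUnique (Fin 1) V).subtypeEquiv fun l => by simp)

variable [Fintype F] [FiniteDimensional F V]

theorem frameCard_succ_le (B : LinearMap.BilinForm F V) {n : ℕ}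
    (d : Fin (n + 1) → F) :
    frameCard B d ≤ ∑ᶠ x : {x // B x x = d 0},
      frameCard (B.restrict (B.orthogonal (F ∙ x.1))) (Fin.tail d) := by
  have : Finite V := Module.finite_of_finite F
  have := Fintype.ofFinite {x // B x x = d 0}
  rw [finsum_eq_sum_of_fintype]
  simp only [frameCard]
  rw [← Nat.card_sigma]
  refine Nat.card_le_card_of_injective (fun l => ⟨⟨l.1 0, by simp [l.2]⟩,
    ⟨fun i => ⟨l.1 i.succ, ?_⟩, fun i j => ?_⟩⟩) ?_
  · rw [mem_orthogonal_iff]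
    intro y hy
    obtain ⟨t, rfl⟩ := Submodule.mem_span_singleton.1 hy
    simp [l.2, Matrix.diagonal_apply_ne _ (Fin.succ_ne_zero i).symm]
  · simp [LinearMap.BilinForm.restrict_apply, l.2, Matrix.diagonal_apply, Fin.tail]
  · intro l l' h
    have h := congrArg (fun z : (x : {x // B x x = d 0}) ×
      {l : Fin n → B.orthogonal (F ∙ x.1) //
        ∀ i j, B.restrict _ (l i) (l j) = Matrix.diagonal (Fin.tail d) i j} =>
      (Fin.cons z.1.1 fun i => (z.2.1 i : V) : Fin (n + 1) → V)) h
    refine Subtype.ext (funext fun i => ?_)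
    have h := congrFun h i
    refine Fin.cases (fun h => ?_) (fun i h => ?_) i h <;> simpa using h

theorem fiberCard_le_of_finrank (h2 : (2 : F) ≠ 0)
    {B : LinearMap.BilinForm F V} (hs : B.IsSymm)
    (hB : B.Nondegenerate) {k : ℕ} (hk : finrank F V = k + 1) {d : F} (hd : d ≠ 0) :
    fiberCard (fun x => B x x) d ≤ Fintype.card F ^ k + Fintype.card F ^ (k / 2) := by
  obtain ⟨w, e, hw, he⟩ := exists_diagonal_equiv h2 hs hB hk
  have h := abs_fiberCard_diagonal_sub_le h2 k w hw hd
  rw [← fiberCard_congr e he, abs_le] at h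
  zify
  linarith [h.2]

/-- In a nondegenerate space of dimension three, the number of representations of `B x x ≠ 0` is
determined by the orthogonal complement of `x`. -/
theorem exists_fiberCard_ternary (h2 : (2 : F) ≠ 0)
    {B : LinearMap.BilinForm F V} (hs : B.IsSymm)
    (hB : B.Nondegenerate) (hV : finrank F V = 3) {x : V} (hx : B x x ≠ 0) {c : F} (hc : c ≠ 0) :
    (fiberCard (fun v => B v v) (B x x) : ℤ) +
      Fintype.card F * fiberCard
        (fun v => B.restrict (B.orthogonal (F ∙ x)) v v) c = 2 * Fintype.card F ^ 2 := by
  classical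
  have hWd : finrank F (B.orthogonal (F ∙ x)) = 2 := by
    have := finrank_orthogonal_span_singleton_add_one hx
    omega
  set W := B.orthogonal (F ∙ x)
  have hWs : (B.restrict W).IsSymm := ⟨fun _ _ => hs.eq _ _⟩
  have hWB := restrict_nondegenerate_orthogonal_spanSingleton B hB hs.isRefl hx
  obtain ⟨w, e, hw, he⟩ := exists_diagonal_equiv h2 hWs hWB hWd
  obtain ⟨ε, -, hε⟩ := fiberCard_binary_add h2 (hw 0) (hw 1)
  have hcW := hε (Y := Unit) (fun _ => 0) c
  have hcV := hε (Y := F) (fun t => B x x * t ^ 2) (B x x)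
  have h0 : fiberCard (fun _ : Unit => (0 : F)) c = 0 := by
    have : IsEmpty {x : Unit // (0 : F) = c} := ⟨fun x => hc x.2.symm⟩
    simp [fiberCard]
  have h1 : fiberCard (fun t : F => B x x * t ^ 2) (B x x) = 2 := by
    rw [fiberCard]
    have hset : {t | B x x * t ^ 2 = B x x} = (({1, -1} : Finset F) : Set F) := by
      ext t
      simp [hx, sq_eq_one_iff]
    have hne : (1 : F) ≠ -1 := fun h => h2 (by linear_combination h)
    calc Nat.card {t | B x x * t ^ 2 = B x x} = Nat.card (({1, -1} : Finset F) : Set F) := by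
          rw [hset]
      _ = 2 := by rw [Nat.card_coe_set_eq, Set.ncard_coe_finset, Finset.card_pair hne]
  have hx0 : x ≠ 0 := fun h => hx (by simp [h])
  let e2 : W ≃ F × F := e.trans (finTwoArrowEquiv F)
  have he2 : ∀ v : W, w 0 * (e2 v).1 ^ 2 + w 1 * (e2 v).2 ^ 2 = B v v := fun v => by
    have := he v
    rw [Fin.sum_univ_two] at this
    exact this
  let eV : F × W ≃ V := ((LinearEquiv.toSpanNonzeroSingleton F V x hx0).toEquiv.prodCongr
    (Equiv.refl _)).trans (Submodule.prodEquivOfIsCompl _ _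
      (isCompl_span_singleton_orthogonal hx)).toEquiv
  have heV : ∀ z : F × W, eV z = z.1 • x + z.2 := fun z => by
    simp [eV]
  have eqW : fiberCard (fun v => B.restrict W v v) c =
      fiberCard (fun z : (F × F) × Unit => w 0 * z.1.1 ^ 2 + w 1 * z.1.2 ^ 2 + 0) c :=
    fiberCard_congr (e2.trans (Equiv.prodPUnit _).symm) (fun v => by
      simpa using he2 v) c
  have eqV : fiberCard (fun v => B v v) (B x x) =
      fiberCard (fun z : (F × F) × F => w 0 * z.1.1 ^ 2 + w 1 * z.1.2 ^ 2 + B x x * z.2 ^ 2)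
        (B x x) := by
    let e3 : (F × F) × F ≃ V :=
      (Equiv.prodComm _ _).trans (((Equiv.refl F).prodCongr e2.symm).trans eV)
    refine (fiberCard_congr e3 (fun z => ?_) _).symm
    obtain ⟨v, hv⟩ := e2.surjective z.1
    have hz : e3 z = z.2 • x + v := by simp [e3, heV, ← hv]
    have hxv : B x v = 0 := v.2 x (Submodule.mem_span_singleton_self x)
    have hvx : B v x = 0 := (hs.eq _ _).trans hxv
    rw [hz, ← hv, he2]
    simp [hxv, hvx]
    ring
  rw [eqW, eqV, hcW, hcV, h0, h1]
  simp
  ring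

theorem frameCard_two_le (h2 : (2 : F) ≠ 0)
    {B : LinearMap.BilinForm F V} (hs : B.IsSymm)
    (hB : B.Nondegenerate) (hV : finrank F V = 3) {d : Fin 2 → F} (hd : ∀ i, d i ≠ 0) :
    frameCard B d ≤ Fintype.card F ^ 3 := by
  have : Finite V := Module.finite_of_finite F
  have := Fintype.ofFinite {x // B x x = d 0}
  set q := Fintype.card F with hq
  have hq0 : 0 < q := Fintype.card_pos
  set S := fiberCard (fun v => B v v) (d 0) with hS
  have hW : ∀ x : {x // B x x = d 0},
      ((q * frameCard (B.restrict (B.orthogonal (F ∙ x.1))) (Fin.tail d) : ℕ) : ℤ) =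
        2 * q ^ 2 - S := fun x => by
    have h := exists_fiberCard_ternary h2 hs hB hV (x := x.1) (by rw [x.2]; exact hd 0) (hd 1)
    rw [x.2] at h
    rw [frameCard_one, show Fin.tail d 0 = d 1 from rfl]
    push_cast
    linear_combination h
  have h := frameCard_succ_le B d
  rw [finsum_eq_sum_of_fintype] at h
  have h' : ((q * frameCard B d : ℕ) : ℤ) ≤ S * (2 * q ^ 2 - S) := by
    calc ((q * frameCard B d : ℕ) : ℤ) ≤
        ((q * ∑ x : {x // B x x = d 0},
          frameCard (B.restrict (B.orthogonal (F ∙ x.1))) (Fin.tail d) : ℕ) : ℤ) := by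
          exact_mod_cast Nat.mul_le_mul_left q h
      _ = S * (2 * q ^ 2 - S) := by
          rw [Finset.mul_sum]
          push_cast only [Nat.cast_sum]
          rw [Finset.sum_congr rfl fun x _ => hW x, Finset.sum_const, Finset.card_univ,
            nsmul_eq_mul, hS, fiberCard, Nat.card_eq_fintype_card]
  have h'' : ((q * frameCard B d : ℕ) : ℤ) ≤ ((q * q ^ 3 : ℕ) : ℤ) := by
    push_cast at h' ⊢
    nlinarith [sq_nonneg ((S : ℤ) - q ^ 2)]
  exact Nat.le_of_mul_le_mul_left (Nat.cast_le.1 h'') hq0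

theorem frameCard_le (h2 : (2 : F) ≠ 0) (n : ℕ) : ∀ {V : Type} [AddCommGroup V] [Module F V]
    [FiniteDimensional F V] {B : LinearMap.BilinForm F V} (_ : B.IsSymm) (_ : B.Nondegenerate)
    (_ : finrank F V = n + 3) {d : Fin (n + 2) → F} (_ : ∀ i, d i ≠ 0),
    frameCard B d * Fintype.card F ^ (2 * n) ≤
      Fintype.card F ^ (n + 3).choose 2 * (Fintype.card F ^ 2 + 1) ^ n := by
  set q := Fintype.card F with hq
  have hq0 : 0 < q := Fintype.card_pos
  induction n with
  | zero =>
    intro V _ _ _ B hs hB hV d hd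
    simpa using frameCard_two_le h2 hs hB hV hd
  | succ n ih =>
    intro V _ _ _ B hs hB hV d hd
    have : Finite V := Module.finite_of_finite F
    have := Fintype.ofFinite {x // B x x = d 0}
    have hS := fiberCard_le_of_finrank h2 hs hB hV (hd 0)
    rw [fiberCard, Nat.card_eq_fintype_card, ← hq] at hS
    have h := frameCard_succ_le B d
    rw [finsum_eq_sum_of_fintype] at h
    have hW : ∀ x : {x // B x x = d 0},
        frameCard (B.restrict (B.orthogonal (F ∙ x.1))) (Fin.tail d) * q ^ (2 * n) ≤
          q ^ (n + 3).choose 2 * (q ^ 2 + 1) ^ n := fun x => by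
      have hx : B x.1 x.1 ≠ 0 := by rw [x.2]; exact hd 0
      refine ih (B := B.restrict (B.orthogonal (F ∙ x.1))) ⟨fun _ _ => hs.eq _ _⟩
        (restrict_nondegenerate_orthogonal_spanSingleton B hB hs.isRefl hx) ?_ fun i => hd _
      have := finrank_orthogonal_span_singleton_add_one hx
      omega
    have hpow : q ^ ((n + 3) / 2) ≤ q ^ (n + 1) := Nat.pow_le_pow_right hq0 (by omega)
    calc frameCard B d * q ^ (2 * (n + 1))
        ≤ (∑ x : {x // B x x = d 0},
          frameCard (B.restrict (B.orthogonal (F ∙ x.1))) (Fin.tail d)) * q ^ (2 * (n + 1)) := by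
          gcongr
      _ = (∑ x : {x // B x x = d 0}, frameCard (B.restrict (B.orthogonal (F ∙ x.1)))
            (Fin.tail d) * q ^ (2 * n)) * q ^ 2 := by
          rw [← Finset.sum_mul]; ring
      _ ≤ (∑ x : {x // B x x = d 0}, q ^ (n + 3).choose 2 * (q ^ 2 + 1) ^ n) * q ^ 2 := by
          exact Nat.mul_le_mul_right _ (Finset.sum_le_sum fun x _ => hW x)
      _ = Fintype.card {x // B x x = d 0} * (q ^ (n + 3).choose 2 * (q ^ 2 + 1) ^ n) * q ^ 2 := by
          simp [Finset.card_univ]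
      _ ≤ (q ^ (n + 3) + q ^ (n + 1)) * (q ^ (n + 3).choose 2 * (q ^ 2 + 1) ^ n) * q ^ 2 := by
          gcongr
          exact hS.trans (by gcongr)
      _ = q ^ (n + 1 + 3).choose 2 * (q ^ 2 + 1) ^ (n + 1) := by
          rw [show (n + 1 + 3).choose 2 = (n + 3) + (n + 3).choose 2 by
            rw [show n + 1 + 3 = (n + 3) + 1 by ring, Nat.choose_succ_succ' (n + 3) 1,
              Nat.choose_one_right]]
          ring

end BilinForm

section Gram

open Module Matrix

/-- The number of `m × n` matrices `L` with `Lᵀ L = Λ`. -/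
noncomputable def gramCard {R : Type*} [CommRing R] (m : ℕ) {n : ℕ}
    (Λ : Matrix (Fin n) (Fin n) R) : ℕ :=
  Nat.card {L : Matrix (Fin m) (Fin n) R // Lᵀ * L = Λ}

theorem gramCard_le {F : Type} [Field F] [Fintype F] (h2 : (2 : F) ≠ 0) {n : ℕ}
    {Λ : Matrix (Fin (n + 2)) (Fin (n + 2)) F} (hs : Λ.IsSymm) (hΛ : Λ.det ≠ 0) :
    gramCard (n + 3) Λ * Fintype.card F ^ (2 * n) ≤
      Fintype.card F ^ (n + 3).choose 2 * (Fintype.card F ^ 2 + 1) ^ n := by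
  have : Invertible (2 : F) := invertibleOfNonzero h2
  have hsymm : (Matrix.toBilin' Λ).IsSymm := ⟨fun x y => by
    rw [toBilin'_apply', toBilin'_apply', dotProduct_mulVec, ← mulVec_transpose, hs.eq,
      dotProduct_comm]⟩
  obtain ⟨v₀, hv₀⟩ := LinearMap.BilinForm.exists_orthogonal_basis (B := Matrix.toBilin' Λ)
    ⟨fun x y => hsymm.eq x y⟩
  obtain ⟨v, hv⟩ : ∃ v : Basis (Fin (n + 2)) F (Fin (n + 2) → F),
      (Matrix.toBilin' Λ).IsOrthoᵢ v := by
    refine ⟨v₀.reindex (finCongr (finrank_fin_fun F)), fun i j hij => ?_⟩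
    simp only [Function.onFun, Basis.reindex_apply]
    exact hv₀ fun h => hij ((finCongr (finrank_fin_fun F)).symm.injective h)
  have hd := hv.not_isOrtho_basis_self_of_separatingLeft
    (LinearMap.BilinForm.nondegenerate_toBilin'_of_det_ne_zero' Λ hΛ).1
  have hsV : (Matrix.toBilin' (1 : Matrix (Fin (n + 3)) (Fin (n + 3)) F)).IsSymm :=
    ⟨fun x y => by simp [toBilin'_apply', dotProduct_comm]⟩
  refine le_trans (Nat.mul_le_mul_right _ ?_) (frameCard_le h2 n hsV
    (LinearMap.BilinForm.nondegenerate_toBilin'_of_det_ne_zero' 1 (by simp)) (by simp)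
    (d := fun i => Matrix.toBilin' Λ (v i) (v i)) hd)
  refine Nat.card_le_card_of_injective (fun L => ⟨fun i => L.1 *ᵥ v i, fun i j => ?_⟩) ?_
  · have : Matrix.toBilin' 1 (L.1 *ᵥ v i) (L.1 *ᵥ v j) = Matrix.toBilin' Λ (v i) (v j) := by
      obtain ⟨L, rfl⟩ := L
      rw [toBilin'_apply', toBilin'_apply', one_mulVec, ← mulVec_mulVec, dotProduct_mulVec _ Lᵀ,
        vecMul_transpose]
    rw [this, diagonal_apply]
    split_ifs with h
    · rw [h]
    · exact hv h
  · rintro ⟨L, hL⟩ ⟨L', hL'⟩ h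
    simp only [Subtype.mk.injEq] at h ⊢
    refine Matrix.toLin'.injective (v.ext fun i => ?_)
    simpa using congrFun h i

/-- If `A` has `n` independent columns of length `n + 1`, then `Aᵀ x = 0` has no nonzero solution
with a suitable coordinate equal to zero. -/
theorem exists_coord_of_det_ne_zero {F : Type*} [Field F] {n : ℕ}
    {A : Matrix (Fin (n + 1)) (Fin n) F} (hA : (Aᵀ * A).det ≠ 0) :
    ∃ k, ∀ x, Aᵀ *ᵥ x = 0 → x k = 0 → x = 0 := by
  have hsurj : LinearMap.range Aᵀ.mulVecLin = ⊤ := by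
    rw [LinearMap.range_eq_top]
    intro y
    refine ⟨A *ᵥ ((Aᵀ * A)⁻¹ *ᵥ y), ?_⟩
    rw [mulVecLin_apply, mulVec_mulVec, mulVec_mulVec, mul_nonsing_inv _ (isUnit_iff_ne_zero.2 hA),
      one_mulVec]
  have hrank := LinearMap.finrank_range_add_finrank_ker Aᵀ.mulVecLin
  rw [hsurj, finrank_top, finrank_fin_fun, finrank_fin_fun] at hrank
  obtain ⟨v, hv, hspan⟩ := finrank_eq_one_iff'.1 (by omega :
    finrank F (LinearMap.ker Aᵀ.mulVecLin) = 1)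
  obtain ⟨k, hk⟩ : ∃ k, v.1 k ≠ 0 := by
    by_contra! h
    exact hv (Subtype.ext (funext h))
  refine ⟨k, fun x hx hxk => ?_⟩
  obtain ⟨c, hc⟩ := hspan ⟨x, hx⟩
  have hc : c • v.1 = x := congrArg Subtype.val hc
  have : c = 0 := by
    rw [← hc] at hxk
    simpa [hk] using hxk
  rw [← hc, this, zero_smul]

/-- Uniqueness of lifts: a solution of `Aᵀ A ≡ Λ (mod p ^ r)` is determined modulo `p ^ (r - δ)` by
its residue modulo `p ^ (1 + δ)` together with one row and the entries above the diagonal of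
`A₀ᵀ A`. -/
theorem pow_dvd_of_gram_eq {n p r δ : ℕ} (hp : p.Prime)
    (hδ : ∀ a : ℤ, (p : ℤ) ^ (1 + δ) ∣ 2 * a → (p : ℤ) ∣ a)
    {A₀ A D : Matrix (Fin (n + 1)) (Fin n) ℤ} {k : Fin (n + 1)}
    (hk : ∀ x : Fin (n + 1) → ℤ, (∀ j, (p : ℤ) ∣ (A₀ᵀ *ᵥ x) j) →
      (p : ℤ) ∣ x k → ∀ i, (p : ℤ) ∣ x i)
    (hA : ∀ i j, (p : ℤ) ∣ (A - A₀) i j)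
    (hD : ∀ i j, (p : ℤ) ^ (1 + δ) ∣ D i j)
    (hgram : ∀ i j, (p : ℤ) ^ r ∣ (Aᵀ * A - (A - D)ᵀ * (A - D)) i j)
    (hrow : ∀ j, (p : ℤ) ^ r ∣ D k j)
    (hupper : ∀ i j, i < j → (p : ℤ) ^ r ∣ (A₀ᵀ * D) i j) (hr : 1 + δ ≤ r - δ) :
    ∀ i j, (p : ℤ) ^ (r - δ) ∣ D i j := by
  have hp0 : (p : ℤ) ≠ 0 := by exact_mod_cast hp.ne_zero
  suffices ∀ s, 1 + δ ≤ s → s ≤ r - δ → ∀ i j, (p : ℤ) ^ s ∣ D i j from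
    this _ hr le_rfl
  intro s hs
  induction s, hs using Nat.le_induction with
  | base => exact fun _ => hD
  | succ s hs ih =>
    intro hsr
    have ih := ih (by omega)
    obtain ⟨X, hDX⟩ : ∃ X : Matrix (Fin (n + 1)) (Fin n) ℤ, D = (p : ℤ) ^ s • X := by
      choose X hX using ih
      exact ⟨of X, by ext i j; simp [hX i j]⟩
    set M := Aᵀ * X with hM
    set N := Xᵀ * X with hN
    have hexp : Aᵀ * A - (A - D)ᵀ * (A - D) =
        (p : ℤ) ^ s • (M + Mᵀ) - (p : ℤ) ^ s • (p : ℤ) ^ s • N := by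
      rw [hDX, hM, hN]
      simp only [transpose_sub, transpose_smul, transpose_mul, transpose_transpose, Matrix.sub_mul,
        Matrix.mul_sub, Matrix.smul_mul, Matrix.mul_smul, smul_add, smul_sub]
      abel
    have hdiff : ∀ i j, (p : ℤ) ∣ (Aᵀ * X) i j - (A₀ᵀ * X) i j := fun i j => by
      rw [← Matrix.sub_apply, ← Matrix.sub_mul, ← transpose_sub]
      rw [mul_apply]
      exact Finset.dvd_sum fun l _ => (hA l i).mul_right _
    have hcancel : ∀ (t : ℕ) (a : ℤ), s + t ≤ r → (p : ℤ) ^ r ∣ (p : ℤ) ^ s * a →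
        (p : ℤ) ^ t ∣ a := fun t a ht h => by
      have := (pow_dvd_pow (p : ℤ) ht).trans h
      rw [pow_add] at this
      exact (mul_dvd_mul_iff_left (pow_ne_zero _ hp0)).1 this
    have hg : ∀ i j, (p : ℤ) ^ (1 + δ) ∣ M i j + M j i := fun i j => by
      have h := hgram i j
      rw [hexp] at h
      simp only [Matrix.sub_apply, Matrix.smul_apply, Matrix.add_apply, transpose_apply,
        smul_eq_mul] at h
      rw [← mul_sub] at h
      have h := hcancel (1 + δ) _ (by omega) h
      exact (dvd_sub_left ((pow_dvd_pow (p : ℤ) hs).mul_right _)).1 h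
    have hup : ∀ i j, i < j → (p : ℤ) ∣ M i j := fun i j hij => by
      have h := hupper i j hij
      rw [hDX, Matrix.mul_smul, Matrix.smul_apply, smul_eq_mul] at h
      have h := hcancel 1 _ (by omega) h
      rw [pow_one] at h
      exact (dvd_sub_left h).1 (hdiff i j)
    have hall : ∀ i j, (p : ℤ) ∣ M i j := fun i j => by
      rcases lt_trichotomy i j with h | rfl | h
      · exact hup i j h
      · exact hδ _ (by simpa [two_mul] using hg i i)
      · exact (dvd_add_left (hup j i h)).1
          ((dvd_pow_self _ (by omega : 1 + δ ≠ 0)).trans (hg i j))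
    intro i j
    rw [hDX, Matrix.smul_apply, smul_eq_mul, pow_succ]
    refine mul_dvd_mul_left _ (hk (fun l => X l j) (fun l => ?_) ?_ i)
    · exact (dvd_sub_right (hall l j)).1 (hdiff l j)
    · have h := hrow j
      rw [hDX, Matrix.smul_apply, smul_eq_mul] at h
      simpa using hcancel 1 _ (by omega) h

end Gram

section Lift

open Module Matrix

theorem gram_map_eq_iff {m n N : ℕ} (A : Matrix (Fin m) (Fin n) ℤ) (Λ : Matrix (Fin n) (Fin n) ℤ) :
    (A.map (Int.cast : ℤ → ZMod N))ᵀ * A.map Int.cast = Λ.map Int.cast ↔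
      ∀ i j, (N : ℤ) ∣ (Aᵀ * A) i j - Λ i j := by
  have h : (A.map (Int.cast : ℤ → ZMod N))ᵀ * A.map Int.cast =
      (Aᵀ * A).map (Int.castRingHom (ZMod N)) := by
    rw [Matrix.map_mul, transpose_map]; rfl
  rw [h, ← Matrix.ext_iff]
  refine forall_congr' fun i => forall_congr' fun j => ?_
  rw [← ZMod.intCast_zmod_eq_zero_iff_dvd, Int.cast_sub, sub_eq_zero]
  rfl

theorem exists_coord_of_not_dvd_det {n p : ℕ} [Fact p.Prime] {Λ : Matrix (Fin n) (Fin n) ℤ}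
    (hΛ : ¬ (p : ℤ) ∣ Λ.det) {A : Matrix (Fin (n + 1)) (Fin n) ℤ}
    (hA : ∀ i j, (p : ℤ) ∣ (Aᵀ * A) i j - Λ i j) :
    ∃ k, ∀ x : Fin (n + 1) → ℤ, (∀ j, (p : ℤ) ∣ (Aᵀ *ᵥ x) j) → (p : ℤ) ∣ x k →
      ∀ i, (p : ℤ) ∣ x i := by
  obtain ⟨k, hk⟩ := exists_coord_of_det_ne_zero (A := A.map (Int.cast : ℤ → ZMod p)) (by
    refine ne_of_eq_of_ne (congrArg Matrix.det ((gram_map_eq_iff A Λ).2 hA)) ?_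
    have : (Λ.map (Int.cast : ℤ → ZMod p)).det = (Λ.det : ZMod p) :=
      ((Int.castRingHom (ZMod p)).map_det Λ).symm
    rwa [this, ne_eq, ZMod.intCast_zmod_eq_zero_iff_dvd])
  refine ⟨k, fun x hx hxk i => ?_⟩
  have h := hk (fun i => (x i : ZMod p)) (funext fun j => ?_)
    ((ZMod.intCast_zmod_eq_zero_iff_dvd _ _).2 hxk)
  · exact (ZMod.intCast_zmod_eq_zero_iff_dvd _ _).1 (congrFun h i)
  · have := (ZMod.intCast_zmod_eq_zero_iff_dvd _ _).2 (hx j)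
    simpa [mulVec, dotProduct] using this

theorem pow_dvd_sub_of_digit_eq {p e r : ℕ} (her : e ≤ r) {a b : ℤ} (h : (p : ℤ) ^ e ∣ a - b)
    (hd : ((a / (p : ℤ) ^ e : ℤ) : ZMod (p ^ (r - e))) = ((b / (p : ℤ) ^ e : ℤ) : ZMod _)) :
    (p : ℤ) ^ r ∣ a - b := by
  have h1 : a % (p : ℤ) ^ e = b % (p : ℤ) ^ e :=
    Int.emod_eq_emod_iff_emod_sub_eq_zero.2 (Int.emod_eq_zero_of_dvd h)
  rw [ZMod.intCast_eq_intCast_iff_dvd_sub] at hd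
  have h2 : a - b = (p : ℤ) ^ e * (a / (p : ℤ) ^ e - b / (p : ℤ) ^ e) := by
    have ha := Int.mul_ediv_add_emod a ((p : ℤ) ^ e)
    have hb := Int.mul_ediv_add_emod b ((p : ℤ) ^ e)
    linear_combination -ha + hb + h1
  rw [h2, ← pow_mul_pow_sub (p : ℤ) her]
  refine mul_dvd_mul_left _ ?_
  rw [← neg_sub, dvd_neg]
  exact_mod_cast hd

theorem card_le_pairs (n : ℕ) :
    Nat.card {q : Fin n × Fin n // q.1 ≤ q.2} = (n + 1).choose 2 := by
  have h : ∀ j : Fin n, (Finset.univ.filter (· ≤ j)).card = (j : ℕ) + 1 := fun j => by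
    rw [show Finset.univ.filter (· ≤ j) = Finset.Iic j by ext; simp, Fin.card_Iic]
  rw [Nat.card_eq_fintype_card, Fintype.card_subtype, Finset.card_filter,
    Fintype.sum_prod_type_right]
  simp only [← Finset.card_filter, h]
  rw [Fin.sum_univ_eq_sum_range (fun j => j + 1)]
  have := Finset.sum_range_succ' (fun j => j) n
  rw [add_zero, Finset.sum_range_id, ← Nat.choose_two_right] at this
  exact this.symm

/-- Counting the lifts of solutions of `Lᵀ L = Λ` from modulus `p ^ (1 + δ)` to `p ^ r`. -/
theorem gramCard_pow_le {n p r δ : ℕ} (hp : p.Prime)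
    (hδ : ∀ a : ℤ, (p : ℤ) ^ (1 + δ) ∣ 2 * a → (p : ℤ) ∣ a) (hr : 1 + δ ≤ r - δ)
    {Λ : Matrix (Fin n) (Fin n) ℤ} (hΛ : ¬ (p : ℤ) ∣ Λ.det) :
    gramCard (n + 1) (Λ.map (Int.cast : ℤ → ZMod (p ^ r))) ≤
      gramCard (n + 1) (Λ.map (Int.cast : ℤ → ZMod (p ^ (1 + δ)))) *
        ((p ^ (r - (1 + δ))) ^ (n + 1).choose 2 * (p ^ δ) ^ ((n + 1) * n)) := by
  classical
  have := Fact.mk hp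
  have hpe : (p : ℤ) ∣ (p : ℤ) ^ (1 + δ) := dvd_pow_self _ (by omega)
  let lift (N : ℕ) (R : Matrix (Fin (n + 1)) (Fin n) (ZMod N)) : Matrix (Fin (n + 1)) (Fin n) ℤ :=
    R.map ZMod.cast
  have hlift : ∀ (N : ℕ) R, (lift N R).map (Int.cast : ℤ → ZMod N) = R := fun N R => by
    ext i j; simp [lift]
  let Sol (N : ℕ) := {R : Matrix (Fin (n + 1)) (Fin n) (ZMod N) // Rᵀ * R = Λ.map Int.cast}
  have hSol : ∀ {N : ℕ} (R : Sol N) i j, (N : ℤ) ∣ ((lift N R.1)ᵀ * lift N R.1) i j - Λ i j :=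
    fun {N} R => (gram_map_eq_iff _ _).1 (by rw [hlift]; exact R.2)
  have hcoord : ∀ R : Sol (p ^ (1 + δ)), _ := fun R =>
    exists_coord_of_not_dvd_det (p := p) hΛ (A := lift _ R.1) fun i j =>
      hpe.trans (by exact_mod_cast hSol R i j)
  choose k hk using hcoord
  let red (L : Sol (p ^ r)) : Sol (p ^ (1 + δ)) := ⟨(lift _ L.1).map Int.cast,
    (gram_map_eq_iff _ _).2 fun i j => by
      refine dvd_trans ?_ (hSol L i j)
      exact_mod_cast pow_dvd_pow p (by omega)⟩
  let g (L : Sol (p ^ r)) (q : Fin n × Fin n) : ℤ :=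
    if q.1 = q.2 then lift _ L.1 (k (red L)) q.2
    else ((lift _ (red L).1)ᵀ * lift _ L.1) q.1 q.2
  let Φ (L : Sol (p ^ r)) : Sol (p ^ (1 + δ)) ×
      (({q : Fin n × Fin n // q.1 ≤ q.2} → ZMod (p ^ (r - (1 + δ)))) ×
        (Fin (n + 1) × Fin n → ZMod (p ^ (r - (r - δ))))) :=
    (red L, fun q => ((g L q.1 / (p : ℤ) ^ (1 + δ) : ℤ) : ZMod _),
      fun q => ((lift _ L.1 q.1 q.2 / (p : ℤ) ^ (r - δ) : ℤ) : ZMod _))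
  have hΦ : Function.Injective Φ := by
    intro L L' h
    simp only [Φ, Prod.mk.injEq] at h
    obtain ⟨hred, hg, htop⟩ := h
    set A := lift _ L.1 with hA
    set A' := lift _ L'.1 with hA'
    set A₀ := lift _ (red L).1 with hA₀
    have hcongr : ∀ i j, (p : ℤ) ^ (1 + δ) ∣ (A - A') i j := fun i j => by
      have h := congrFun (congrFun (congrArg Subtype.val hred.symm) i) j
      have := (ZMod.intCast_eq_intCast_iff_dvd_sub _ _ _).1 h
      exact_mod_cast this
    have hbase : ∀ i j, (p : ℤ) ^ (1 + δ) ∣ (A - A₀) i j := fun i j => by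
      have h := congrFun (congrFun (hlift _ (red L).1) i) j
      have := (ZMod.intCast_eq_intCast_iff_dvd_sub _ _ _).1 h
      exact_mod_cast this
    have hgsub : ∀ i j, i ≤ j → (p : ℤ) ^ r ∣ g L (i, j) - g L' (i, j) := fun i j hij => by
      refine pow_dvd_sub_of_digit_eq (by omega) ?_ (congrFun hg ⟨(i, j), hij⟩)
      simp only [g, ← hred]
      split_ifs with h
      · exact hcongr _ _
      · rw [← Matrix.sub_apply, ← Matrix.mul_sub, mul_apply]
        exact Finset.dvd_sum fun l _ => (hcongr l _).mul_left _
    have hfin := pow_dvd_of_gram_eq (r := r) hp hδ (A₀ := A₀) (A := A) (D := A - A') (hk (red L))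
      (fun i j => hpe.trans (hbase i j)) hcongr ?_ ?_ ?_ hr
    · refine Subtype.ext ?_
      rw [← hlift _ L.1, ← hlift _ L'.1]
      ext i j
      refine (ZMod.intCast_eq_intCast_iff_dvd_sub _ _ _).2 ?_
      have := pow_dvd_sub_of_digit_eq (r := r) (by omega) (hfin i j) (congrFun htop (i, j))
      rw [← neg_sub, dvd_neg]
      exact_mod_cast this
    · intro i j
      have h1 := hSol L i j
      have h2 := hSol L' i j
      rw [sub_sub_cancel, Matrix.sub_apply]
      have := dvd_sub h1 h2
      rw [sub_sub_sub_cancel_right] at this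
      exact_mod_cast this
    · intro j
      have := hgsub j j le_rfl
      simpa [g, ← hred] using this
    · intro i j hij
      have := hgsub i j hij.le
      simp only [g, ← hred, if_neg hij.ne] at this
      rw [Matrix.mul_sub]
      exact this
  have h0 : NeZero p := ⟨hp.ne_zero⟩
  have := Nat.card_le_card_of_injective Φ hΦ
  simp only [Nat.card_prod, Nat.card_fun, Nat.card_zmod, Nat.card_eq_fintype_card (α := Fin _),
    Fintype.card_fin, card_le_pairs, Nat.sub_sub_self (show δ ≤ r by omega)] at this
  exact this

end Lift

section Density

theorem succ_mul_sub_half (n : ℕ) : (n + 1) * n - n * (n + 1) / 2 = (n + 1).choose 2 := by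
  rw [Nat.choose_two_right, Nat.add_sub_cancel, Nat.mul_comm n (n + 1)]
  have : 2 ∣ (n + 1) * n := by
    rw [mul_comm]; exact (Nat.even_mul_succ_self n).two_dvd
  omega

theorem nuId_le_of_gramCard_le {p n : ℕ} {Λ : Matrix (Fin n) (Fin n) ℤ} {K : ℝ≥0∞}
    {r₀ : ℕ} (h : ∀ r ≥ r₀, (gramCard (n + 1) (Λ.map (Int.cast : ℤ → ZMod (p ^ r))) : ℝ≥0∞) ≤
      K * (p : ℝ≥0∞) ^ (r * (n + 1).choose 2)) : nuId p n Λ ≤ K := by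
  refine Filter.limsup_le_of_le (h := ?_)
  filter_upwards [Filter.eventually_ge_atTop r₀] with r hr
  rw [succ_mul_sub_half]
  exact ENNReal.div_le_of_le_mul (h r hr)

theorem gramCard_zmod_le {p n : ℕ} (hp : p.Prime) (h2 : p ≠ 2)
    {Λ : Matrix (Fin (n + 2)) (Fin (n + 2)) ℤ} (hs : Λ.IsSymm) (hΛ : ¬ (p : ℤ) ∣ Λ.det) :
    gramCard (n + 3) (Λ.map (Int.cast : ℤ → ZMod p)) * p ^ (2 * n) ≤
      p ^ (n + 3).choose 2 * (p ^ 2 + 1) ^ n := by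
  have := Fact.mk hp
  have h2' : (2 : ZMod p) ≠ 0 := by
    intro h
    have : ((2 : ℕ) : ZMod p) = 0 := by exact_mod_cast h
    rw [ZMod.natCast_eq_zero_iff] at this
    exact h2 ((Nat.prime_dvd_prime_iff_eq hp Nat.prime_two).1 this)
  have hdet : (Λ.map (Int.cast : ℤ → ZMod p)).det ≠ 0 := by
    have : (Λ.map (Int.cast : ℤ → ZMod p)).det = (Λ.det : ZMod p) :=
      ((Int.castRingHom (ZMod p)).map_det Λ).symm
    rwa [this, ne_eq, ZMod.intCast_zmod_eq_zero_iff_dvd]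
  have := gramCard_le h2' (hs.map _) hdet
  rwa [ZMod.card] at this

theorem gramCard_zmod_le_pow {n N : ℕ} [NeZero N] (m : ℕ) (Λ : Matrix (Fin n) (Fin n) (ZMod N)) :
    gramCard m Λ ≤ N ^ (m * n) := by
  refine (Nat.card_le_card_of_injective _ Subtype.val_injective).trans_eq ?_
  rw [Matrix, Nat.card_fun, Nat.card_fun]
  simp [pow_mul, mul_comm m n]

theorem one_add_inv_pow_le {x : ℝ} (hx : 1 ≤ x) (n : ℕ) : (1 + x⁻¹) ^ n ≤ 1 + 2 ^ n / x := by
  have hx0 : 0 < x := one_pos.trans_le hx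
  have hi : x⁻¹ ≤ 1 := inv_le_one_of_one_le₀ hx
  induction n with
  | zero => simp; positivity
  | succ n ih =>
    have hb : (1 + x⁻¹) ^ n ≤ 2 ^ n := pow_le_pow_left₀ (by positivity) (by linarith) n
    have := mul_le_mul_of_nonneg_right hb (inv_nonneg.2 hx0.le)
    rw [div_eq_mul_inv] at *
    rw [pow_succ, pow_succ]
    nlinarith

theorem nuId_le_of_ne_two {p n : ℕ} (hp : p.Prime) (h2 : p ≠ 2)
    {Λ : Matrix (Fin (n + 2)) (Fin (n + 2)) ℤ} (hs : Λ.IsSymm) (hΛ : ¬ (p : ℤ) ∣ Λ.det) :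
    nuId p (n + 2) Λ ≤ ENNReal.ofReal (1 + 2 ^ n / (p : ℝ) ^ 2) := by
  have hp1 : (1 : ℝ) ≤ p := by exact_mod_cast hp.one_le
  have hp0 : (0 : ℝ) < p := one_pos.trans_le hp1
  refine nuId_le_of_gramCard_le (r₀ := 1) fun r hr => ?_
  have hδ : ∀ a : ℤ, (p : ℤ) ^ (1 + 0) ∣ 2 * a → (p : ℤ) ∣ a := fun a ha => by
    rw [add_zero, pow_one] at ha
    refine IsCoprime.dvd_of_dvd_mul_left ?_ ha
    exact_mod_cast Nat.isCoprime_iff_coprime.2 ((Nat.coprime_primes hp Nat.prime_two).2 h2)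
  have h1 := gramCard_pow_le (r := r) hp hδ (by omega) hΛ
  have hbase := gramCard_zmod_le hp h2 hs hΛ
  have h3 : gramCard (n + 3) (Λ.map (Int.cast : ℤ → ZMod (p ^ (1 + 0)))) =
      gramCard (n + 3) (Λ.map (Int.cast : ℤ → ZMod p)) := by
    rw [add_zero, pow_one]
  rw [h3, pow_zero, one_pow, mul_one, add_zero] at h1
  set G := gramCard (n + 3) (Λ.map (Int.cast : ℤ → ZMod p))
  have hG : (G : ℝ) ≤ (1 + 2 ^ n / (p : ℝ) ^ 2) * (p : ℝ) ^ (n + 3).choose 2 := by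
    have hb : (G : ℝ) * p ^ (2 * n) ≤ p ^ (n + 3).choose 2 * (p ^ 2 + 1) ^ n := by
      exact_mod_cast hbase
    refine le_trans ?_ (mul_le_mul_of_nonneg_right
      (one_add_inv_pow_le (one_le_pow₀ hp1 : (1 : ℝ) ≤ p ^ 2) n) (by positivity))
    have : (1 + ((p : ℝ) ^ 2)⁻¹) ^ n = (p ^ 2 + 1) ^ n / p ^ (2 * n) := by
      rw [pow_mul, ← div_pow]; congr 1; field_simp
    rw [this, div_mul_eq_mul_div, le_div_iff₀ (by positivity), mul_comm (_ ^ n)]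
    exact hb
  have hr' : (gramCard (n + 3) (Λ.map (Int.cast : ℤ → ZMod (p ^ r))) : ℝ) ≤
      (1 + 2 ^ n / (p : ℝ) ^ 2) * (p : ℝ) ^ (r * (n + 3).choose 2) := by
    have h1' : (gramCard (n + 3) (Λ.map (Int.cast : ℤ → ZMod (p ^ r))) : ℝ) ≤
      G * (p ^ (r - 1)) ^ (n + 3).choose 2 := by exact_mod_cast h1
    refine h1'.trans ((mul_le_mul_of_nonneg_right hG (by positivity)).trans_eq ?_)
    rw [mul_assoc, ← mul_pow, ← pow_succ', Nat.sub_add_cancel hr, pow_mul]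
  have := ENNReal.ofReal_le_ofReal hr'
  rwa [ENNReal.ofReal_natCast, ENNReal.ofReal_mul (by positivity), ENNReal.ofReal_pow hp0.le,
    ENNReal.ofReal_natCast] at this

theorem nuId_two_le {n : ℕ} {Λ : Matrix (Fin n) (Fin n) ℤ} (hΛ : ¬ (2 : ℤ) ∣ Λ.det) :
    nuId 2 n Λ ≤ 8 ^ ((n + 1) * n) := by
  refine nuId_le_of_gramCard_le (r₀ := 4) fun r hr => ?_
  have h1 := gramCard_pow_le (r := r) (δ := 1) Nat.prime_two (fun a ha => by
    norm_num at ha ⊢; omega) (by omega) hΛ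
  have h2 := gramCard_zmod_le_pow (n + 1) (Λ.map (Int.cast : ℤ → ZMod (2 ^ (1 + 1))))
  have h3 : (2 ^ (r - (1 + 1))) ^ (n + 1).choose 2 ≤ 2 ^ (r * (n + 1).choose 2) := by
    rw [← pow_mul]
    exact Nat.pow_le_pow_right two_pos (Nat.mul_le_mul_right _ (Nat.sub_le _ _))
  have h4 := h1.trans (Nat.mul_le_mul h2 (Nat.mul_le_mul_right _ h3))
  rw [mul_left_comm, mul_comm, mul_comm (_ ^ _ * _) (2 ^ _), ← mul_pow, mul_comm (2 ^ _)] at h4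
  exact_mod_cast h4

end Density

/-- For fixed `n ≥ 2` there is `C > 0`, independent of `p` and `Λ`, such that for
every prime `p` and every positive definite `Λ ∈ M_{n,n}(ℤ)` with `p ∤ det Λ`,
`ν_p(I_{n+1}, Λ) ≤ 1 + C/p²`. -/
theorem nu_bound_nondivisor (n : ℕ) (hn : 2 ≤ n) :
    ∃ C : ℝ, 0 < C ∧ ∀ (p : ℕ) (Λ : Matrix (Fin n) (Fin n) ℤ),
      p.Prime → Λ.PosDef → ¬ (p : ℤ) ∣ Λ.det →
      nuId p n Λ ≤ 1 + ENNReal.ofReal C / (p : ℝ≥0∞) ^ 2 := by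
  obtain ⟨n, rfl⟩ := Nat.exists_eq_add_of_le' hn
  refine ⟨2 ^ n + 4 * 8 ^ ((n + 2 + 1) * (n + 2)), by positivity, fun p Λ hp hpos hΛ => ?_⟩
  have hs : Λ.IsSymm :=
    (Matrix.conjTranspose_eq_transpose_of_trivial Λ).symm.trans hpos.isHermitian
  have hp0 : (0 : ℝ) < p := by exact_mod_cast hp.pos
  have hC : 1 + ENNReal.ofReal (2 ^ n + 4 * 8 ^ ((n + 2 + 1) * (n + 2))) / (p : ℝ≥0∞) ^ 2 =
      ENNReal.ofReal (1 + (2 ^ n + 4 * 8 ^ ((n + 2 + 1) * (n + 2))) / (p : ℝ) ^ 2) := by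
    rw [ENNReal.ofReal_add one_pos.le (by positivity), ENNReal.ofReal_one,
      ENNReal.ofReal_div_of_pos (by positivity), ENNReal.ofReal_pow hp0.le, ENNReal.ofReal_natCast]
  rw [hC]
  obtain rfl | h2 := eq_or_ne p 2
  · refine (nuId_two_le hΛ).trans ?_
    have : (8 : ℝ≥0∞) ^ ((n + 2 + 1) * (n + 2)) =
        ENNReal.ofReal (8 ^ ((n + 2 + 1) * (n + 2))) := by
      rw [ENNReal.ofReal_pow (by norm_num)]; norm_num
    rw [this]
    refine ENNReal.ofReal_le_ofReal ?_
    have : (0 : ℝ) < 2 ^ n := by positivity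
    push_cast
    linarith
  · refine (nuId_le_of_ne_two hp h2 hs hΛ).trans (ENNReal.ofReal_le_ofReal ?_)
    gcongr
    exact le_add_of_nonneg_right (by positivity)
end

section
/- Fix an integer n ≥ 2. There exists a constant C > 0, independent of p and Λ, such that for every prime p and every positive definite matrix Λ ∈ M_{n,n}(ℤ) with p | det(Λ), one has ν_p(I_{n+1}, Λ) ≤ C · Σ p^{β₂(l₁,…,l_n) + β₃(l₁,…,l_n) + … + β_n(l₁,…,l_n)}, where the sum runs over all n-tuples of nonnegative integers (l₁,…,l_n) with l₁ + l₂ + … + l_n ≤ o_p(det(Λ)). -/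
open scoped ENNReal

/-- `o_p(k)`, the exponent of the prime `p` in the integer `k`, valued in `ℕ∞ ⊆ ℤ ∪ {∞}`
(here realized inside `WithTop ℤ`), with the convention `o_p(0) = ∞`. -/
def opVal (p : ℕ) (k : ℤ) : WithTop ℤ :=
  if k = 0 then ⊤ else ((k.natAbs.factorization p : ℤ) : WithTop ℤ)

/-- `μ_{{1,…,j},A}` for `j = A.card`: the determinant of the submatrix of `Λ` with
rows the first `A.card` rows (i.e. rows `1,…,j` in 1-based indexing) and columns
indexed by `A` (in increasing order). -/
def muMinor {n : ℕ} (Λ : Matrix (Fin n) (Fin n) ℤ) (A : Finset (Fin n)) : ℤ :=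
  Matrix.det (Matrix.of fun i k : Fin A.card =>
    Λ (Fin.castLE ((A.card_le_univ).trans_eq (Fintype.card_fin n)) i)
      ((A.orderIsoOfFin rfl k : Fin n)))

/-- `p^b` for `b ∈ ℤ ∪ {∞}`, interpreted in the extended nonnegative reals. -/
noncomputable def epow (p : ℕ) (b : WithTop ℤ) : ℝ≥0∞ :=
  b.recTopCoe ⊤ (fun z => (p : ℝ≥0∞) ^ z)

/-- `β_i(l₁,…,l_n)`: the minimum of `(i-1)·l_i` and, over `1 ≤ j ≤ i-1`, of
`(i-1-j)·l_i + min_{|A|=j} o_p(μ_{{1,…,j},A}) - (l₁ + ⋯ + l_j)`.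
Here `l : Fin n → ℕ` records `(l₁,…,l_n)` (so `l_k` is `l ⟨k-1,_⟩`), and the value
is taken in `ℤ ∪ {∞}`. -/
noncomputable def betaExp (p n : ℕ) (Λ : Matrix (Fin n) (Fin n) ℤ) (l : Fin n → ℕ)
    (i : ℕ) : WithTop ℤ :=
  let bl : ℕ → ℤ := fun k => if h : k < n then (l ⟨k, h⟩ : ℤ) else 0
  min ((((i : ℤ) - 1) * bl (i - 1) : ℤ) : WithTop ℤ)
    ((Finset.Icc 1 (i - 1)).inf fun j =>
      ((((i : ℤ) - 1 - (j : ℤ)) * bl (i - 1) - ∑ k ∈ Finset.range j, bl k : ℤ) : WithTop ℤ)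
        + (Finset.powersetCard j (Finset.univ : Finset (Fin n))).inf
            fun A => opVal p (muMinor Λ A))

open Finset in
lemma card_le_prod_of_card_fiber_le {ι α : Type*} [Fintype ι] [LinearOrder ι] [DecidableEq α]
    (S : Finset (ι → α)) (N : ι → ℝ≥0∞)
    (h : ∀ f ∈ S, ∀ i,
      ((({g ∈ S | ∀ j < i, g j = f j}.image fun g => g i).card : ℕ) : ℝ≥0∞) ≤ N i) :
    (S.card : ℝ≥0∞) ≤ ∏ i, N i := by
  suffices H : ∀ s : Finset ι, (∀ i ∈ s, ∀ j < i, j ∈ s) →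
      ((S.image fun g => s.restrict g).card : ℝ≥0∞) ≤ ∏ i ∈ s, N i by
    have := H univ (by simp)
    rwa [card_image_of_injective] at this
    intro f g hfg
    ext i
    exact congrFun hfg ⟨i, mem_univ i⟩
  intro s
  induction s using Finset.induction_on_max with
  | empty =>
    intro _
    have : (S.image fun g => (∅ : Finset ι).restrict g).card ≤ 1 :=
      Finset.card_le_one.2 fun a _ b _ => by
        ext i; exact (notMem_empty _ i.2).elim
    simpa using this
  | insert a s ha ih =>
    intro hlow
    have has : a ∉ s := fun hh => lt_irrefl _ (ha a hh)
    have hmem : ∀ j, j ∈ s ↔ j < a := fun j => ⟨ha j, fun hj => by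
      have := hlow a (by simp) j hj
      rw [mem_insert] at this
      exact this.resolve_left hj.ne⟩
    have hs : ∀ i ∈ s, ∀ j < i, j ∈ s := fun i hi j hj =>
      (hmem j).2 (hj.trans ((hmem i).1 hi))
    rw [prod_insert has]
    have hmaps : ∀ x ∈ S.image fun g => (insert a s).restrict g,
        (Finset.restrict₂ (π := fun _ => α) (subset_insert a s)) x ∈
          S.image fun g => s.restrict g := by
      intro x hx
      obtain ⟨g, hg, rfl⟩ := mem_image.1 hx
      exact mem_image.2 ⟨g, hg, rfl⟩
    rw [card_eq_sum_card_fiberwise hmaps, Nat.cast_sum]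
    calc _ ≤ ∑ b ∈ S.image fun g => s.restrict g, N a := by
          refine sum_le_sum fun b hb => ?_
          obtain ⟨f, hf, rfl⟩ := mem_image.1 hb
          refine le_trans (Nat.cast_le.2 ?_) (h f hf a)
          refine card_le_card_of_injOn (fun x => x ⟨a, mem_insert_self a s⟩) ?_ ?_
          · intro x hx
            simp only [coe_filter, mem_image, Set.mem_ofPred_eq] at hx
            obtain ⟨⟨g, hg, rfl⟩, hx⟩ := hx
            simp only [coe_image, coe_filter, Set.mem_image, Set.mem_ofPred_eq]
            refine ⟨g, ⟨hg, fun j hj => ?_⟩, rfl⟩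
            exact congrFun hx ⟨j, (hmem j).2 hj⟩
          · intro x hx y hy hxy
            simp only [coe_filter, Set.mem_ofPred_eq] at hx hy
            have hxy' := hx.2.trans hy.2.symm
            ext ⟨i, hi⟩
            rcases mem_insert.1 hi with rfl | hi'
            · exact hxy
            · exact congrFun hxy' ⟨i, hi'⟩
      _ ≤ _ := by
          rw [sum_const, nsmul_eq_mul, mul_comm]
          gcongr
          exact ih hs

lemma card_vecMul_eq_zero_le {p : ℕ} (hp : p.Prime) (l j : ℕ) (B : Matrix (Fin j) (Fin j) ℤ)
    (hB : B.det ≠ 0) :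
    Nat.card {h : Fin j → ZMod (p ^ l) //
      Matrix.vecMul h (B.map (Int.cast : ℤ → ZMod (p ^ l))) = 0}
      ≤ p ^ B.det.natAbs.factorization p := by
  have : NeZero (p ^ l) := ⟨pow_ne_zero _ hp.ne_zero⟩
  let f : (Fin j → ZMod (p ^ l)) →+ (Fin j → ZMod (p ^ l)) :=
    (Matrix.vecMulLinear (B.map (Int.cast : ℤ → ZMod (p ^ l)))).toAddMonoidHom
  let g : (Fin j → ℤ) →ₗ[ℤ] (Fin j → ℤ) := Matrix.vecMulLinear B
  let c : (Fin j → ℤ) →+ (Fin j → ZMod (p ^ l)) :=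
    { toFun := fun x i => (x i : ZMod (p ^ l))
      map_zero' := by ext; simp
      map_add' := by intros; ext; simp }
  have hc : Function.Surjective c := fun y => by
    choose x hx using fun i => ZMod.intCast_surjective (y i)
    exact ⟨x, funext hx⟩
  have hker : Nat.card {h : Fin j → ZMod (p ^ l) //
      Matrix.vecMul h (B.map (Int.cast : ℤ → ZMod (p ^ l))) = 0}
      = f.range.index := by
    have h1 := f.range.index_mul_card
    have h2 := f.ker.card_mul_index
    rw [AddSubgroup.index_ker] at h2
    have h3 : 0 < Nat.card f.range := Nat.card_pos
    have : Nat.card f.ker = f.range.index := Nat.eq_of_mul_eq_mul_right h3 (h2.trans h1.symm)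
    rw [← this]
    rfl
  have hg : Function.Injective g := by
    rw [← LinearMap.ker_eq_bot, LinearMap.ker_eq_bot']
    intro x hx
    by_contra hne
    exact hB (Matrix.exists_vecMul_eq_zero_iff.1 ⟨x, hne, hx⟩)
  have hgidx : g.toAddMonoidHom.range.index = B.det.natAbs := by
    have h1 := Submodule.natAbs_det_equiv (LinearMap.range g) (LinearEquiv.ofInjective g hg)
    have h3 : LinearMap.det g = B.det := by
      rw [← Matrix.det_transpose, ← LinearMap.det_toLin']
      congr 1
      ext x i
      simp [g]
    rw [← h3]
    exact h1.symm
  have hdvd : f.range.index ∣ B.det.natAbs := by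
    rw [← hgidx, ← AddSubgroup.index_comap_of_surjective _ hc]
    apply AddSubgroup.index_dvd_of_le
    rintro _ ⟨x, rfl⟩
    refine ⟨c x, ?_⟩
    ext i
    simp [f, g, c, Matrix.vecMul, dotProduct]
  have hpow : f.range.index ∣ p ^ (l * j) := by
    have := AddSubgroup.index_dvd_card f.range
    simpa [pow_mul] using this
  obtain ⟨k, -, hk⟩ := (Nat.dvd_prime_pow hp).1 hpow
  rw [hker, hk]
  rw [hk] at hdvd
  exact Nat.pow_le_pow_right hp.pos
    ((hp.pow_dvd_iff_le_factorization (by simpa using hB)).1 hdvd)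

lemma sum_eq_sum_castLE {M : Type*} [AddCommMonoid M] {k n : ℕ} (h : k ≤ n) (F : Fin n → M)
    (hF : ∀ b : Fin n, k ≤ b → F b = 0) : ∑ b, F b = ∑ a : Fin k, F (Fin.castLE h a) := by
  obtain ⟨d, rfl⟩ := Nat.exists_eq_add_of_le h
  rw [Fin.sum_univ_add, Finset.sum_eq_zero (s := (Finset.univ : Finset (Fin d))), add_zero]
  · rfl
  · intro x _
    exact hF _ (by simp)

/-- `H` is upper triangular with diagonal entries `p ^ l i`, and the entries above the diagonal
are reduced modulo the diagonal entry of their column. -/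
structure IsHermiteForm (p : ℕ) {n : ℕ} (l : Fin n → ℕ) (H : Matrix (Fin n) (Fin n) ℤ) : Prop where
  upper : ∀ i j, j < i → H i j = 0
  diag : ∀ i, H i i = (p : ℤ) ^ l i
  nonneg : ∀ i j, i < j → 0 ≤ H i j
  lt : ∀ i j, i < j → H i j < (p : ℤ) ^ l j

lemma card_le_of_vecMul_eq_zero {p : ℕ} (hp : p.Prime) (l : ℕ) {i j : ℕ} (hj : j ≤ i)
    (B : Matrix (Fin j) (Fin j) ℤ) (hB : B.det ≠ 0) (X : Finset (Fin i → ZMod (p ^ l)))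
    (hX : ∀ x ∈ X, ∀ y ∈ X, (∀ a : Fin i, j ≤ a → x a = y a) →
      Matrix.vecMul (fun a : Fin j => x (Fin.castLE hj a) - y (Fin.castLE hj a))
        (B.map (Int.cast : ℤ → ZMod (p ^ l))) = 0) :
    X.card ≤ p ^ B.det.natAbs.factorization p * (p ^ l) ^ (i - j) := by
  have : NeZero (p ^ l) := ⟨pow_ne_zero _ hp.ne_zero⟩
  classical
  let t : (Fin i → ZMod (p ^ l)) → (Fin (i - j) → ZMod (p ^ l)) :=
    fun x b => x ⟨j + b, by omega⟩
  refine (Finset.card_le_mul_card_image (f := t) X _ fun b hb => ?_).trans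
    (Nat.mul_le_mul_left _ ((Finset.card_le_univ _).trans ?_))
  · obtain ⟨y, hy, rfl⟩ := Finset.mem_image.1 hb
    refine le_trans ?_ (card_vecMul_eq_zero_le hp l j B hB)
    rw [← Nat.card_eq_finsetCard]
    have htail : ∀ x : Fin i → ZMod (p ^ l), t x = t y → ∀ a : Fin i, j ≤ a → x a = y a := by
      intro x hx a ha
      have := congrFun hx ⟨a - j, by omega⟩
      simpa [t, Nat.add_sub_cancel' ha] using this
    refine Nat.card_le_card_of_injective
      (fun x => ⟨fun a : Fin j => x.1 (Fin.castLE hj a) - y (Fin.castLE hj a), ?_⟩) ?_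
    · obtain ⟨x, hx⟩ := x
      rw [Finset.mem_filter] at hx
      exact hX x hx.1 y hy (htail x hx.2)
    · rintro ⟨x, hx⟩ ⟨x', hx'⟩ hxx
      rw [Finset.mem_filter] at hx hx'
      rw [Subtype.mk.injEq]
      ext a
      by_cases ha : j ≤ a
      · rw [htail x hx.2 a ha, htail x' hx'.2 a ha]
      · have := congrFun (Subtype.mk.inj hxx) ⟨a, by omega⟩
        simpa using this
  · simp

lemma IsHermiteForm.det_eq {p n : ℕ} {l : Fin n → ℕ} {H : Matrix (Fin n) (Fin n) ℤ}
    (hH : IsHermiteForm p l H) : H.det = (p : ℤ) ^ ∑ i, l i := by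
  rw [Matrix.det_of_isUpperTriangular (fun i j hij => hH.upper i j hij), ← Finset.prod_pow_eq_pow_sum]
  exact Finset.prod_congr rfl fun i _ => hH.diag i

lemma IsHermiteForm.finite (p : ℕ) {n : ℕ} (l : Fin n → ℕ) :
    {H : Matrix (Fin n) (Fin n) ℤ | IsHermiteForm p l H}.Finite := by
  refine Set.Finite.subset (Set.Finite.pi' fun i => Set.Finite.pi' fun j =>
    Set.finite_Icc (0 : ℤ) (p ^ l j)) ?_
  intro H hH i j
  replace hH : IsHermiteForm p l H := hH
  rcases lt_trichotomy i j with h | rfl | h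
  · exact ⟨hH.nonneg i j h, (hH.lt i j h).le⟩
  · rw [hH.diag]; exact ⟨by positivity, le_rfl⟩
  · rw [hH.upper i j h]; exact ⟨le_rfl, by positivity⟩

/-- The rows of `Y` indexed below `i` are determined by the columns of `H` indexed below `i`. -/
lemma IsHermiteForm.row_eq {p n : ℕ} (hp : p.Prime) {l : Fin n → ℕ}
    {H H' Y Y' : Matrix (Fin n) (Fin n) ℤ} (hH : IsHermiteForm p l H) (hH' : IsHermiteForm p l H')
    (hY : H.transpose * Y = H'.transpose * Y') (i : Fin n)
    (hcol : ∀ j < i, ∀ a, H a j = H' a j) : ∀ a < i, ∀ c, Y a c = Y' a c := by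
  intro a
  induction a using WellFoundedLT.induction with
  | ind a ih =>
    intro ha c
    have h1 := congrFun (congrFun hY a) c
    simp only [Matrix.mul_apply, Matrix.transpose_apply] at h1
    have h2 : ∑ b, (H b a * Y b c - H' b a * Y' b c) = H a a * (Y a c - Y' a c) := by
      rw [Finset.sum_eq_single a]
      · rw [hcol a ha a]; ring
      · intro b _ hb
        rcases lt_or_gt_of_ne hb with h | h
        · rw [hcol a ha b, ih b h (h.trans ha) c, sub_self]
        · rw [hH.upper b a h, hH'.upper b a h]; ring
      · simp
    rw [Finset.sum_sub_distrib, h1, sub_self, hH.diag] at h2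
    have hp0 : (p : ℤ) ^ l a ≠ 0 := pow_ne_zero _ (by exact_mod_cast hp.ne_zero)
    have := (mul_eq_zero.1 h2.symm).resolve_left hp0
    linarith

lemma IsHermiteForm.muMinor_eq {p n : ℕ} {l : Fin n → ℕ} {H Y Λ : Matrix (Fin n) (Fin n) ℤ}
    (hH : IsHermiteForm p l H) (hY : H.transpose * Y = Λ) (A : Finset (Fin n))
    (hA : A.card ≤ n) :
    muMinor Λ A = (p : ℤ) ^ (∑ k : Fin A.card, l (Fin.castLE hA k)) *
      (Matrix.of fun i k : Fin A.card => Y (Fin.castLE hA i) (A.orderIsoOfFin rfl k)).det := by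
  have h1 : (Matrix.of fun i k : Fin A.card => H (Fin.castLE hA k) (Fin.castLE hA i)).det =
      (p : ℤ) ^ (∑ k : Fin A.card, l (Fin.castLE hA k)) := by
    rw [Matrix.det_of_isLowerTriangular, ← Finset.prod_pow_eq_pow_sum]
    · exact Finset.prod_congr rfl fun i _ => hH.diag _
    · intro i j hij
      exact hH.upper _ _ (Fin.castLE_lt_castLE_iff hA |>.2 hij)
  rw [← h1, ← Matrix.det_mul, muMinor]
  congr 1
  ext i k
  rw [← hY]
  simp only [Matrix.of_apply, Matrix.mul_apply, Matrix.transpose_apply]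
  exact sum_eq_sum_castLE hA _ fun b hb => by
    rw [hH.upper b _ (Fin.lt_def.2 (i.2.trans_le hb)), zero_mul]

lemma epow_coe (p : ℕ) (z : ℤ) : epow p (z : WithTop ℤ) = (p : ℝ≥0∞) ^ z := rfl

lemma epow_sum {ι : Type*} {p : ℕ} (hp : p.Prime) (s : Finset ι) (b : ι → WithTop ℤ)
    (hb : ∀ i ∈ s, b i ≠ ⊤) : epow p (∑ i ∈ s, b i) = ∏ i ∈ s, epow p (b i) := by
  classical
  have hp0 : (p : ℝ≥0∞) ≠ 0 := by exact_mod_cast hp.ne_zero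
  have hs : ∑ i ∈ s, b i = ((∑ i ∈ s, (b i).untopD 0 : ℤ) : WithTop ℤ) := by
    rw [WithTop.coe_sum]
    refine Finset.sum_congr rfl fun i hi => ?_
    lift b i to ℤ using hb i hi with z
    rfl
  rw [hs, epow_coe]
  have : ∀ i ∈ s, epow p (b i) = (p : ℝ≥0∞) ^ ((b i).untopD 0) := by
    intro i hi
    lift b i to ℤ using hb i hi with z
    rfl
  rw [Finset.prod_congr rfl this]
  clear hs this hb
  induction s using Finset.induction_on with
  | empty => simp
  | insert a s ha ih =>
    rw [Finset.sum_insert ha, Finset.prod_insert ha,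
      ENNReal.zpow_add hp0 (ENNReal.natCast_ne_top p), ih]

lemma le_epow_inf {ι : Type*} {p : ℕ} (s : Finset ι) (b : ι → WithTop ℤ) (N : ℝ≥0∞)
    (h : ∀ i ∈ s, N ≤ epow p (b i)) : N ≤ epow p (s.inf b) := by
  rcases s.eq_empty_or_nonempty with rfl | hs
  · exact le_top
  · obtain ⟨i, hi, hib⟩ := Finset.exists_mem_eq_inf s hs b
    rw [hib]
    exact h i hi

lemma le_epow_add_inf {ι : Type*} {p : ℕ} (s : Finset ι) (z : WithTop ℤ) (b : ι → WithTop ℤ)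
    (N : ℝ≥0∞) (h : ∀ i ∈ s, N ≤ epow p (z + b i)) : N ≤ epow p (z + s.inf b) := by
  rcases s.eq_empty_or_nonempty with rfl | hs
  · rw [Finset.inf_empty, WithTop.add_top]
    exact le_top
  · obtain ⟨i, hi, hib⟩ := Finset.exists_mem_eq_inf s hs b
    rw [hib]
    exact h i hi

lemma betaExp_ne_top (p n : ℕ) (Λ : Matrix (Fin n) (Fin n) ℤ) (l : Fin n → ℕ) (i : ℕ) :
    betaExp p n Λ l i ≠ ⊤ :=
  ne_top_of_le_ne_top (WithTop.coe_ne_top) (min_le_left _ _)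

lemma natCast_le_zpow {p N a : ℕ} {z : ℤ} (hN : N ≤ p ^ a)
    (hz : (a : ℤ) = z) : (N : ℝ≥0∞) ≤ (p : ℝ≥0∞) ^ z := by
  rw [← hz, zpow_natCast]
  exact_mod_cast hN

lemma le_epow_betaExp {p n : ℕ} (Λ : Matrix (Fin n) (Fin n) ℤ) (l : Fin n → ℕ)
    (i : Fin n) (N : ℕ) (h0 : N ≤ p ^ (i * l i))
    (h : ∀ A : Finset (Fin n), ∀ hA : A.card ≤ n, A.card ≤ i → muMinor Λ A ≠ 0 →
      ∃ v, (muMinor Λ A).natAbs.factorization p = v + ∑ k : Fin A.card, l (Fin.castLE hA k) ∧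
        N ≤ p ^ (v + (i - A.card) * l i)) :
    (N : ℝ≥0∞) ≤ epow p (betaExp p n Λ l (i + 1)) := by
  have hi : (i : ℕ) + 1 - 1 = i := rfl
  simp only [betaExp, hi, i.2, dite_true, Fin.eta]
  rcases min_choice ((((((i : ℕ) + 1 : ℕ) : ℤ) - 1) * (l i : ℤ) : ℤ) : WithTop ℤ) _ with hm | hm
  · rw [hm, epow_coe]
    exact natCast_le_zpow h0 (by push_cast; ring)
  · rw [hm]
    refine le_epow_inf _ _ _ fun j hj => ?_
    rw [Finset.mem_Icc] at hj
    refine le_epow_add_inf _ _ _ _ fun A hA => ?_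
    rw [Finset.mem_powersetCard] at hA
    obtain ⟨-, rfl⟩ := hA
    have hAn : A.card ≤ n := hj.2.trans i.2.le
    rw [opVal]
    split_ifs with hmu
    · rw [WithTop.add_top]; exact le_top
    · rw [← WithTop.coe_add, epow_coe]
      obtain ⟨v, hv, hN⟩ := h A hAn hj.2 hmu
      refine natCast_le_zpow hN ?_
      rw [hv, ← Fin.sum_univ_eq_sum_range (fun k => if h : k < n then (l ⟨k, h⟩ : ℤ) else 0)]
      have : ∑ k : Fin A.card, (if h : (k : ℕ) < n then (l ⟨k, h⟩ : ℤ) else 0) =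
          ∑ k : Fin A.card, (l (Fin.castLE hAn k) : ℤ) :=
        Finset.sum_congr rfl fun k _ => dif_pos (k.2.trans_le hAn)
      rw [this]
      push_cast [Nat.cast_sub hj.2]
      ring

lemma IsHermiteForm.card_column_le {p n : ℕ} (hp : p.Prime) {Λ : Matrix (Fin n) (Fin n) ℤ}
    {l : Fin n → ℕ} (i : Fin n) (S : Finset (Matrix (Fin n) (Fin n) ℤ))
    (hS : ∀ H ∈ S, IsHermiteForm p l H ∧ ∃ Y, H.transpose * Y = Λ)
    (hcol : ∀ H ∈ S, ∀ H' ∈ S, ∀ j < i, ∀ a, H a j = H' a j) :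
    ((S.image fun H a => H a i).card : ℝ≥0∞) ≤ epow p (betaExp p n Λ l (i + 1)) := by
  classical
  rcases S.eq_empty_or_nonempty with rfl | ⟨H₀, hH₀⟩
  · simp
  have : NeZero (p ^ l i) := ⟨pow_ne_zero _ hp.ne_zero⟩
  let X : Finset (Fin i → ZMod (p ^ l i)) :=
    S.image fun H a => (H (Fin.castLE i.2.le a) i : ZMod (p ^ l i))
  have hX : (S.image fun H a => H a i).card ≤ X.card := by
    refine Finset.card_le_card_of_injOn
      (fun x a => (x (Fin.castLE i.2.le a) : ZMod (p ^ l i))) ?_ ?_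
    · intro x hx
      rw [Finset.mem_coe, Finset.mem_image] at hx ⊢
      obtain ⟨H, hH, rfl⟩ := hx
      exact ⟨H, hH, rfl⟩
    · intro x hx y hy hxy
      rw [Finset.mem_coe, Finset.mem_image] at hx hy
      obtain ⟨H, hH, rfl⟩ := hx
      obtain ⟨H', hH', rfl⟩ := hy
      replace hH := (hS H hH).1
      replace hH' := (hS H' hH').1
      ext a
      show H a i = H' a i
      rcases lt_trichotomy a i with h | rfl | h
      · have h1 : (H a i : ZMod (p ^ l i)) = H' a i := congrFun hxy ⟨a, h⟩
        rw [ZMod.intCast_eq_intCast_iff, Int.ModEq, Nat.cast_pow] at h1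
        rwa [Int.emod_eq_of_lt (hH.nonneg _ _ h) (hH.lt _ _ h),
          Int.emod_eq_of_lt (hH'.nonneg _ _ h) (hH'.lt _ _ h)] at h1
      · rw [hH.diag, hH'.diag]
      · rw [hH.upper _ _ h, hH'.upper _ _ h]
  refine le_epow_betaExp Λ l i _ (hX.trans ((Finset.card_le_univ _).trans ?_)) ?_
  · simp [← pow_mul, mul_comm]
  · intro A hA hAi hmu
    obtain ⟨h0, Y, hY⟩ := hS H₀ hH₀
    have hmu' := h0.muMinor_eq hY A hA
    set B := Matrix.of fun i k : Fin A.card => Y (Fin.castLE hA i) (A.orderIsoOfFin rfl k) with hBdef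
    have hB : B.det ≠ 0 := fun hB => hmu (by rw [hmu', hB, mul_zero])
    refine ⟨B.det.natAbs.factorization p, ?_, hX.trans ?_⟩
    · rw [hmu', Int.natAbs_mul, Int.natAbs_pow, Int.natAbs_natCast,
        Nat.factorization_mul (pow_ne_zero _ hp.ne_zero) (by simpa using hB)]
      simp [hp.factorization_self, add_comm]
    · rw [pow_add, mul_comm _ (l i), pow_mul]
      refine card_le_of_vecMul_eq_zero hp (l i) hAi B hB X ?_
      intro x hx y hy hxy
      obtain ⟨H, hH, rfl⟩ := Finset.mem_image.1 hx
      obtain ⟨H', hH', rfl⟩ := Finset.mem_image.1 hy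
      have key : ∀ H ∈ S, ∀ c, ∑ a : Fin i, (H (Fin.castLE i.2.le a) i : ZMod (p ^ l i)) *
          (Y (Fin.castLE i.2.le a) c : ZMod (p ^ l i)) = Λ i c := by
        intro H hH c
        obtain ⟨h1, Y', hY'⟩ := hS H hH
        have hrow := h0.row_eq hp h1 (hY.trans hY'.symm) i (hcol H₀ hH₀ H hH)
        rw [← hY', Matrix.mul_apply, Int.cast_sum]
        rw [sum_eq_sum_castLE i.2.le]
        · refine Finset.sum_congr rfl fun a _ => ?_
          rw [hrow _ (Fin.lt_def.2 a.2)]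
          simp
        · intro b hb
          rcases (Fin.le_def.2 hb).eq_or_lt with rfl | hb
          · rw [Matrix.transpose_apply, h1.diag, Int.cast_mul, Int.cast_pow, Int.cast_natCast,
              ← Nat.cast_pow, ZMod.natCast_self, zero_mul]
          · rw [Matrix.transpose_apply, h1.upper _ _ hb, zero_mul, Int.cast_zero]
      ext c
      have h1 := key H hH (A.orderIsoOfFin rfl c)
      rw [← key H' hH' (A.orderIsoOfFin rfl c), ← sub_eq_zero, ← Finset.sum_sub_distrib,
        sum_eq_sum_castLE hAi] at h1
      · simpa [Matrix.vecMul, dotProduct, hBdef, sub_mul] using h1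
      · intro b hb
        have := hxy b hb
        simp only at this
        simp only [this, sub_self]

lemma card_hermiteForm_le {p n : ℕ} (hp : p.Prime) {Λ : Matrix (Fin n) (Fin n) ℤ}
    {l : Fin n → ℕ} (S : Finset (Matrix (Fin n) (Fin n) ℤ))
    (hS : ∀ H ∈ S, IsHermiteForm p l H ∧ ∃ Y, H.transpose * Y = Λ) :
    (S.card : ℝ≥0∞) ≤ epow p (∑ i ∈ Finset.Icc 2 n, betaExp p n Λ l i) := by
  classical
  let T : Matrix (Fin n) (Fin n) ℤ → Fin n → Fin n → ℤ := fun H j a => H a j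
  have hT : Function.Injective T := fun H H' h => by
    ext a j
    exact congrFun (congrFun h j) a
  have h1 := card_le_prod_of_card_fiber_le
    (S.image T)
    (fun i : Fin n => epow p (betaExp p n Λ l (i + 1))) ?_
  · rw [Finset.card_image_of_injective _ hT, ← epow_sum hp _ _ fun i _ => betaExp_ne_top p n Λ l _]
      at h1
    refine h1.trans_eq (congrArg _ ?_)
    rw [Fin.sum_univ_eq_sum_range (fun i => betaExp p n Λ l (i + 1)), Finset.range_eq_Ico,
      Finset.sum_Ico_add' (fun i => betaExp p n Λ l i) 0 n 1]
    rcases Nat.eq_zero_or_pos n with rfl | hn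
    · simp
    · rw [Finset.sum_eq_sum_Ico_succ_bot (by omega)]
      have : betaExp p n Λ l (0 + 1) = 0 := by simp [betaExp]
      rw [this, zero_add]
      rfl
  · intro f hf i
    obtain ⟨H₀, hH₀, rfl⟩ := Finset.mem_image.1 hf
    refine le_trans (Nat.cast_le.2 ?_) (IsHermiteForm.card_column_le hp i
      {H ∈ S | ∀ j < i, ∀ a, H a j = H₀ a j} (fun H hH => hS H (Finset.mem_filter.1 hH).1) ?_)
    · refine Finset.card_le_card ?_
      intro x hx
      simp only [Finset.mem_image, Finset.mem_filter] at hx ⊢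
      obtain ⟨_, ⟨⟨H, hH, rfl⟩, hj⟩, rfl⟩ := hx
      exact ⟨H, ⟨hH, fun j hji a => congrFun (hj j hji) a⟩, rfl⟩
    · intro H hH H' hH' j hj a
      rw [(Finset.mem_filter.1 hH).2 j hj, (Finset.mem_filter.1 hH').2 j hj]

lemma exists_hermiteForm_of_triangular {p m n : ℕ} (hp : p.Prime) {l : Fin n → ℕ}
    (U : Matrix (Fin m) (Fin n) ℤ) (H : Matrix (Fin n) (Fin n) ℤ)
    (hupper : ∀ i j, j < i → H i j = 0) (hdiag : ∀ i, H i i = (p : ℤ) ^ l i) :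
    ∃ (U' : Matrix (Fin m) (Fin n) ℤ) (H' : Matrix (Fin n) (Fin n) ℤ),
      IsHermiteForm p l H' ∧ U' * H' = U * H := by
  suffices h : ∀ k ≤ n, ∃ (U' : Matrix (Fin m) (Fin n) ℤ) (H' : Matrix (Fin n) (Fin n) ℤ),
      (∀ i j, j < i → H' i j = 0) ∧ (∀ i, H' i i = (p : ℤ) ^ l i) ∧ U' * H' = U * H ∧
      ∀ j : Fin n, j < k → ∀ i < j, 0 ≤ H' i j ∧ H' i j < (p : ℤ) ^ l j by
    obtain ⟨U', H', h1, h2, h3, h4⟩ := h n le_rfl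
    exact ⟨U', H', ⟨h1, h2, fun i j hij => (h4 j j.2 i hij).1,
      fun i j hij => (h4 j j.2 i hij).2⟩, h3⟩
  intro k
  induction k with
  | zero => exact fun _ => ⟨U, H, hupper, hdiag, rfl, fun j hj => by simp at hj⟩
  | succ k ih =>
    intro hk
    obtain ⟨U', H', h1, h2, h3, h4⟩ := ih (by omega)
    let c : Fin n := ⟨k, hk⟩
    let q : Fin n → ℤ := fun a => if a < c then H' a c / (p : ℤ) ^ l c else 0
    have hq : ∀ a, ¬ a < c → q a = 0 := fun a ha => if_neg ha
    refine ⟨U' + Matrix.of fun x j => if j = c then ∑ a, q a * U' x a else 0,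
      Matrix.of fun a j => H' a j - q a * H' c j, ?_, ?_, ?_, ?_⟩
    · intro i j hij
      simp only [Matrix.of_apply]
      rw [h1 i j hij]
      by_cases hi : i < c
      · rw [h1 c j (hij.trans hi)]; ring
      · rw [hq i hi]; ring
    · intro i
      simp only [Matrix.of_apply]
      by_cases hi : i < c
      · rw [h1 c i hi, h2]; ring
      · rw [hq i hi, h2]; ring
    · rw [← h3]
      ext x j
      simp only [Matrix.mul_apply, Matrix.add_apply, Matrix.of_apply, add_mul, ite_mul, zero_mul,
        Finset.sum_add_distrib, Finset.sum_ite_eq', Finset.mem_univ, if_true, hq c (lt_irrefl c),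
        mul_sub, Finset.sum_sub_distrib, Finset.sum_mul]
      have e : ∀ a, U' x a * (q a * H' c j) = q a * U' x a * H' c j := fun a => by ring
      simp [e]
    · intro j hj i hij
      simp only [Matrix.of_apply]
      have hpos : (0 : ℤ) < (p : ℤ) ^ l c := pow_pos (by exact_mod_cast hp.pos) _
      rcases (Nat.lt_succ_iff.1 hj).lt_or_eq with hj | hj
      · rw [h1 c j hj, mul_zero, sub_zero]
        exact h4 j hj i hij
      · obtain rfl : j = c := Fin.ext hj
        have hqi : q i = H' i c / (p : ℤ) ^ l c := if_pos hij
        rw [hqi, h2, mul_comm, ← Int.emod_def]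
        exact ⟨Int.emod_nonneg _ hpos.ne', Int.emod_lt_of_pos _ hpos⟩

lemma exists_triangular_of_not_linearIndependent {p m n : ℕ} [Fact p.Prime] {l : Fin n → ℕ}
    (U : Matrix (Fin m) (Fin n) ℤ) (H : Matrix (Fin n) (Fin n) ℤ)
    (hupper : ∀ i j, j < i → H i j = 0) (hdiag : ∀ i, H i i = (p : ℤ) ^ l i)
    (hU : ¬ LinearIndependent (ZMod p) fun i k => (U k i : ZMod p)) :
    ∃ (l' : Fin n → ℕ) (U' : Matrix (Fin m) (Fin n) ℤ) (H' : Matrix (Fin n) (Fin n) ℤ),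
      (∀ i j, j < i → H' i j = 0) ∧ (∀ i, H' i i = (p : ℤ) ^ l' i) ∧
      U' * H' = U * H ∧ ∑ i, l i < ∑ i, l' i := by
  classical
  rw [Fintype.not_linearIndependent_iff] at hU
  obtain ⟨a, ha, i₀, hi₀⟩ := hU
  obtain ⟨i, hi, himax⟩ : ∃ i, a i ≠ 0 ∧ ∀ k, i < k → a k = 0 := by
    have hne : (Finset.univ.filter fun i => a i ≠ 0).Nonempty := ⟨i₀, by simpa using hi₀⟩
    refine ⟨_, (Finset.mem_filter.1 (Finset.max'_mem _ hne)).2, fun k hk => ?_⟩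
    by_contra hak
    exact absurd (Finset.le_max' _ k (by simpa using hak)) (not_le.2 hk)
  obtain ⟨b, hbi, hbk, hb⟩ : ∃ b : Fin n → ℤ, b i = 1 ∧ (∀ k, i < k → b k = 0) ∧
      ∀ x, (p : ℤ) ∣ ∑ k, b k * U x k := by
    choose b hb using fun k => ZMod.intCast_surjective ((a i)⁻¹ * a k)
    refine ⟨fun k => if k = i then 1 else if i < k then 0 else b k, by simp,
      fun k hk => by simp [hk, hk.ne'], fun x => ?_⟩
    have : ∀ k, ((if k = i then 1 else if i < k then 0 else b k : ℤ) : ZMod p) =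
        (a i)⁻¹ * a k := by
      intro k
      split_ifs with h1 h2
      · rw [h1, inv_mul_cancel₀ hi, Int.cast_one]
      · rw [himax k h2, mul_zero, Int.cast_zero]
      · exact hb k
    rw [← ZMod.intCast_zmod_eq_zero_iff_dvd, Int.cast_sum]
    have hax := congrFun ha x
    simp only [Finset.sum_apply, Pi.smul_apply, smul_eq_mul, Pi.zero_apply] at hax
    simp only [Int.cast_mul, this, mul_assoc, ← Finset.mul_sum, hax, mul_zero]
  choose u hu using hb
  refine ⟨Function.update l i (l i + 1), U.updateCol i u,
    Matrix.of fun k j => if k = i then p * H i j else H k j - b k * H i j, ?_, ?_, ?_, ?_⟩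
  · intro k j hjk
    simp only [Matrix.of_apply]
    split_ifs with h
    · rw [← h, hupper k j hjk, mul_zero]
    · rw [hupper k j hjk]
      rcases lt_or_gt_of_ne h with h | h
      · rw [hupper i j (hjk.trans h)]; ring
      · rw [hbk k h]; ring
  · intro k
    simp only [Matrix.of_apply]
    split_ifs with h
    · subst h
      rw [hdiag, Function.update_self]; ring
    · rw [Function.update_of_ne h, hdiag]
      rcases lt_or_gt_of_ne h with h | h
      · rw [hupper i k h]; ring
      · rw [hbk k h]; ring
  · ext x j
    simp only [Matrix.mul_apply, Matrix.of_apply]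
    rw [← Finset.add_sum_erase _ _ (Finset.mem_univ i),
      ← Finset.add_sum_erase _ (fun k => U x k * H k j) (Finset.mem_univ i)]
    rw [Finset.sum_congr rfl fun k (hk : k ∈ Finset.univ.erase i) =>
      show U.updateCol i u x k * (if k = i then p * H i j else H k j - b k * H i j) =
        U x k * H k j - b k * U x k * H i j by
      rw [if_neg (Finset.ne_of_mem_erase hk), Matrix.updateCol_ne (Finset.ne_of_mem_erase hk)]
      ring]
    have h1 := hu x
    rw [← Finset.add_sum_erase _ _ (Finset.mem_univ i), hbi] at h1
    rw [Finset.sum_sub_distrib, ← Finset.sum_mul, if_pos rfl, Matrix.updateCol_self]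
    linear_combination (-H i j) * h1
  · refine Finset.sum_lt_sum (fun k _ => ?_) ⟨i, Finset.mem_univ i, by simp⟩
    by_cases h : k = i
    · subst h; simp
    · rw [Function.update_of_ne h]

lemma exists_hermite_factorization {p m n : ℕ} [hp : Fact p.Prime] (L : Matrix (Fin m) (Fin n) ℤ)
    (hL : (L.transpose * L).det ≠ 0) :
    ∃ (l : Fin n → ℕ) (U : Matrix (Fin m) (Fin n) ℤ) (H : Matrix (Fin n) (Fin n) ℤ),
      IsHermiteForm p l H ∧ U * H = L ∧
      LinearIndependent (ZMod p) fun i k => (U k i : ZMod p) := by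
  let P : ℕ → Prop := fun s => ∃ (l : Fin n → ℕ) (U : Matrix (Fin m) (Fin n) ℤ)
    (H : Matrix (Fin n) (Fin n) ℤ), (∀ i j, j < i → H i j = 0) ∧ (∀ i, H i i = (p : ℤ) ^ l i) ∧
      U * H = L ∧ ∑ i, l i = s
  have hbdd : BddAbove {s | P s} := by
    refine ⟨(L.transpose * L).det.natAbs, ?_⟩
    rintro _ ⟨l, U, H, h1, h2, rfl, rfl⟩
    have hdet : H.det = (p : ℤ) ^ ∑ i, l i := by
      rw [Matrix.det_of_isUpperTriangular (fun i j hij => h1 i j hij),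
        ← Finset.prod_pow_eq_pow_sum]
      exact Finset.prod_congr rfl fun i _ => h2 i
    have hdvd : (p : ℤ) ^ (∑ i, l i) ∣ ((U * H).transpose * (U * H)).det := by
      rw [← Matrix.mul_assoc, Matrix.det_mul, ← hdet]
      exact dvd_mul_left _ _
    have h3 : p ^ (∑ i, l i) ≤ ((U * H).transpose * (U * H)).det.natAbs := by
      refine Nat.le_of_dvd (Int.natAbs_pos.2 hL) ?_
      rw [← Int.natCast_dvd, Nat.cast_pow]
      exact hdvd
    exact (Nat.lt_pow_self hp.out.one_lt).le.trans h3
  have hne : {s | P s}.Nonempty := by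
    refine ⟨0, fun _ => 0, L, 1, fun i j hij => Matrix.one_apply_ne hij.ne', fun i => by simp,
      Matrix.mul_one L, by simp⟩
  obtain ⟨l, U, H, h1, h2, h3, h4⟩ := Nat.sSup_mem hne hbdd
  obtain ⟨U', H', hH', hU'⟩ := exists_hermiteForm_of_triangular hp.out U H h1 h2
  refine ⟨l, U', H', hH', hU'.trans h3, ?_⟩
  by_contra hli
  obtain ⟨l'', U'', H'', g1, g2, g3, g4⟩ :=
    exists_triangular_of_not_linearIndependent U' H' hH'.upper hH'.diag hli
  have := le_csSup hbdd (show P (∑ i, l'' i) from ⟨l'', U'', H'', g1, g2, g3.trans (hU'.trans h3), rfl⟩)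
  omega

open Matrix in
lemma exists_mem_orthogonal_span {F : Type*} [Field F] {ι : Type*} [Fintype ι] {m : ℕ}
    (a : ι → Fin m → F) (ha : LinearIndependent F a) :
    ∃ W : Submodule F (Fin m → F), Module.finrank F W = m - Fintype.card ι ∧
      (∀ v, v ∈ W ↔ ∀ j, a j ⬝ᵥ v = 0) ∧
      ∀ x, (∀ v ∈ W, v ⬝ᵥ x = 0) → x ∈ Submodule.span F (Set.range a) := by
  let B : LinearMap.BilinForm F (Fin m → F) := dotProductBilin F F
  have hB : B.Nondegenerate := by
    constructor
    · intro x hx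
      exact dotProduct_eq_zero x hx
    · intro x hx
      exact dotProduct_eq_zero x fun w => by rw [dotProduct_comm]; exact hx w
  have hR : B.IsRefl := fun x y hxy => by
    show y ⬝ᵥ x = 0
    rw [dotProduct_comm]; exact hxy
  refine ⟨B.orthogonal (Submodule.span F (Set.range a)), ?_, ?_, ?_⟩
  · rw [LinearMap.BilinForm.finrank_orthogonal hB, Module.finrank_fin_fun, finrank_span_eq_card ha]
  · intro v
    constructor
    · intro hv j
      exact hv (a j) (Submodule.subset_span ⟨j, rfl⟩)
    · intro hv w hw
      show w ⬝ᵥ v = 0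
      induction hw using Submodule.span_induction with
      | mem x hx => obtain ⟨j, rfl⟩ := hx; exact hv j
      | zero => exact zero_dotProduct v
      | add x y _ _ hx hy => rw [add_dotProduct, hx, hy, add_zero]
      | smul c x _ hx => rw [smul_dotProduct, hx, smul_zero]
  · intro x hx
    rw [← LinearMap.BilinForm.orthogonal_orthogonal hB hR (Submodule.span F (Set.range a))]
    exact fun v hv => hx v hv

open Matrix in
lemma card_mul_card_le_of_dotProduct_eq {F : Type*} [Field F] [Fintype F] [DecidableEq F]
    (h2 : (2 : F) ≠ 0) {ι : Type*} [Fintype ι] {m : ℕ} (a : ι → Fin m → F)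
    (ha : LinearIndependent F a) (t : ι → F) (t₀ : F) (T : Finset (Fin m → F))
    (hT : ∀ x ∈ T, (∀ j, a j ⬝ᵥ x = t j) ∧ x ⬝ᵥ x = t₀ ∧
      x ∉ Submodule.span F (Set.range a)) :
    T.card * Fintype.card F ≤ 2 * Fintype.card F ^ (m - Fintype.card ι) := by
  classical
  rcases T.eq_empty_or_nonempty with rfl | ⟨u, hu⟩
  · simp
  obtain ⟨W, hWrank, hWmem, hWperp⟩ := exists_mem_orthogonal_span a ha
  have hsub : ∀ x ∈ T, x - u ∈ W := fun x hx => (hWmem _).2 fun j => by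
    rw [dotProduct_sub, (hT x hx).1, (hT u hu).1, sub_self]
  obtain ⟨v, hvW, hv⟩ : ∃ v ∈ W, ∀ x ∈ T, v ⬝ᵥ v = 0 → x ⬝ᵥ v ≠ 0 := by
    by_cases hiso : ∃ v ∈ W, v ⬝ᵥ v ≠ 0
    · obtain ⟨v, hvW, hv⟩ := hiso
      exact ⟨v, hvW, fun x _ h => absurd h hv⟩
    · push Not at hiso
      have : ∃ v ∈ W, v ⬝ᵥ u ≠ 0 := by
        by_contra! h
        exact (hT u hu).2.2 (hWperp u h)
      obtain ⟨v, hvW, hv⟩ := this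
      refine ⟨v, hvW, fun x hx _ => ?_⟩
      have h1 := hiso _ (W.add_mem (hsub x hx) hvW)
      rw [add_dotProduct, dotProduct_add, dotProduct_add, hiso _ (hsub x hx), hiso v hvW,
        dotProduct_comm v, zero_add, add_zero, ← two_mul] at h1
      have h3 := (mul_eq_zero.1 h1).resolve_left h2
      rw [sub_dotProduct, sub_eq_zero] at h3
      rw [h3, dotProduct_comm]
      exact hv
  let f : (Fin m → F) × F → W := fun y => if h : y.1 ∈ T then
    ⟨y.1 - u + y.2 • v, W.add_mem (hsub _ h) (W.smul_mem _ hvW)⟩ else 0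
  have hcard : (T ×ˢ (Finset.univ : Finset F)).card ≤
      2 * ((T ×ˢ (Finset.univ : Finset F)).image f).card := by
    refine Finset.card_le_mul_card_image _ _ fun w hw => ?_
    obtain ⟨⟨x₀, s₀⟩, h₀, rfl⟩ := Finset.mem_image.1 hw
    have hx₀ : x₀ ∈ T := (Finset.mem_product.1 h₀).1
    let s₁ := s₀ + 2 * (x₀ ⬝ᵥ v) / (v ⬝ᵥ v)
    refine le_trans (Finset.card_le_card (t := {(x₀, s₀), (x₀ + (s₀ - s₁) • v, s₁)}) ?_)
      Finset.card_le_two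
    rintro ⟨x, s⟩ hxs
    rw [Finset.mem_filter, Finset.mem_product] at hxs
    obtain ⟨⟨hx, -⟩, hfx⟩ := hxs
    simp only at hx
    simp only [f, hx, hx₀, dif_pos, Subtype.mk.injEq] at hfx
    have hxe : x = x₀ + (s₀ - s) • v := by
      rw [sub_smul]
      linear_combination hfx
    have hq : (s₀ - s) * (2 * (x₀ ⬝ᵥ v) + (s₀ - s) * (v ⬝ᵥ v)) = 0 := by
      have h1 := (hT x hx).2.1
      rw [hxe, add_dotProduct, dotProduct_add, dotProduct_add, (hT x₀ hx₀).2.1,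
        dotProduct_smul, smul_dotProduct, smul_dotProduct, dotProduct_smul, dotProduct_comm v x₀] at h1
      simp only [smul_eq_mul] at h1
      linear_combination h1
    rw [Finset.mem_insert, Finset.mem_singleton]
    rcases mul_eq_zero.1 hq with h | h
    · left
      rw [hxe, h, zero_smul, add_zero, sub_eq_zero.1 h]
    · right
      have hvv : v ⬝ᵥ v ≠ 0 := by
        intro h0
        rw [h0, mul_zero, add_zero] at h
        exact hv x₀ hx₀ h0 ((mul_eq_zero.1 h).resolve_left h2)
      have : s = s₁ := by
        simp only [s₁]
        field_simp
        linear_combination -h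
      rw [hxe, this]
  rw [Finset.card_product, Finset.card_univ] at hcard
  refine hcard.trans (Nat.mul_le_mul_left _ ?_)
  refine (Finset.card_le_univ _).trans_eq ?_
  rw [Module.card_eq_pow_finrank (K := F), hWrank]

open Matrix in
lemma exists_completion {F : Type*} [Field F] {κ : Type*} [Fintype κ] {m : ℕ}
    (b : κ → Fin m → F) (hb : LinearIndependent F b) :
    ∃ e : Fin (m - Fintype.card κ) → Fin m → F, ∀ x : Fin m → F,
      (∀ j, b j ⬝ᵥ x = 0) → (∀ k, e k ⬝ᵥ x = 0) → x = 0 := by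
  obtain ⟨Q, hQ⟩ := Submodule.exists_isCompl (Submodule.span F (Set.range b))
  have hrank : Module.finrank F Q = m - Fintype.card κ := by
    have := Submodule.finrank_add_eq_of_isCompl hQ
    rw [finrank_span_eq_card hb, Module.finrank_fin_fun] at this
    omega
  let e := Module.finBasisOfFinrankEq F Q hrank
  refine ⟨fun k => e k, fun x hx hex => dotProduct_eq_zero x fun w => ?_⟩
  have hw : w ∈ Submodule.span F (Set.range b) ⊔ Q := by rw [hQ.sup_eq_top]; trivial
  obtain ⟨y, hy, z, hz, rfl⟩ := Submodule.mem_sup.1 hw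
  rw [dotProduct_add]
  clear hw
  have h1 : x ⬝ᵥ y = 0 := by
    induction hy using Submodule.span_induction with
    | mem x hx' => obtain ⟨j, rfl⟩ := hx'; rw [dotProduct_comm]; exact hx j
    | zero => exact dotProduct_zero x
    | add x y _ _ hx hy => rw [dotProduct_add, hx, hy, add_zero]
    | smul c x _ hx => rw [dotProduct_smul, hx, smul_zero]
  have h2 : ∀ z : Q, x ⬝ᵥ (z : Fin m → F) = 0 := by
    intro z
    have hz : z ∈ Submodule.span F (Set.range e) := by rw [e.span_eq]; trivial
    induction hz using Submodule.span_induction with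
    | mem x hx' => obtain ⟨j, rfl⟩ := hx'; rw [dotProduct_comm]; exact hex j
    | zero => exact dotProduct_zero x
    | add x y _ _ hx hy => rw [Submodule.coe_add, dotProduct_add, hx, hy, add_zero]
    | smul c x _ hx => rw [Submodule.coe_smul, dotProduct_smul, hx, smul_zero]
  rw [h1, h2 ⟨z, hz⟩, add_zero]

open Matrix in
lemma pow_dvd_of_dotProduct {p : ℕ} {κ : Type*} {m : ℕ} (g : κ → Fin m → ℤ)
    (hg : ∀ x : Fin m → ZMod p, (∀ k, (fun i => (g k i : ZMod p)) ⬝ᵥ x = 0) → x = 0)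
    (hp : p ≠ 0) (r : ℕ) (d : Fin m → ℤ) (hd : ∀ k, (p : ℤ) ^ r ∣ g k ⬝ᵥ d) :
    ∀ i, (p : ℤ) ^ r ∣ d i := by
  induction r generalizing d with
  | zero => simp
  | succ r ih =>
    have h1 : (fun i => (d i : ZMod p)) = 0 := hg _ fun k => by
      have := (ZMod.intCast_zmod_eq_zero_iff_dvd _ p).2 ((dvd_pow_self _ r.succ_ne_zero).trans (hd k))
      simpa [dotProduct] using this
    choose d' hd' using fun i => (ZMod.intCast_zmod_eq_zero_iff_dvd _ p).1 (congrFun h1 i)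
    obtain rfl : d = (p : ℤ) • d' := funext hd'
    intro i
    rw [Pi.smul_apply, smul_eq_mul, pow_succ']
    refine mul_dvd_mul_left _ (ih d' (fun k => ?_) i)
    have := hd k
    rw [dotProduct_smul, smul_eq_mul, pow_succ'] at this
    exact (mul_dvd_mul_iff_left (by exact_mod_cast hp)).1 this

open Matrix in
lemma eq_zero_of_dotProduct {p : ℕ} {κ : Type*} {m r : ℕ} (hp : p ≠ 0) (hr : r ≠ 0)
    (g : κ → Fin m → ZMod (p ^ r))
    (hg : ∀ x : Fin m → ZMod p,
      (∀ k, (fun i => ZMod.castHom (dvd_pow_self p hr) (ZMod p) (g k i)) ⬝ᵥ x = 0) → x = 0)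
    (d : Fin m → ZMod (p ^ r)) (hd : ∀ k, g k ⬝ᵥ d = 0) : d = 0 := by
  choose g' hg' using fun k i => ZMod.intCast_surjective (g k i)
  choose d' hd' using fun i => ZMod.intCast_surjective (d i)
  ext i
  rw [← hd', Pi.zero_apply, ZMod.intCast_zmod_eq_zero_iff_dvd, Nat.cast_pow]
  refine pow_dvd_of_dotProduct g' (fun x hx => hg x fun k => ?_) hp r d' (fun k => ?_) i
  · rw [← hx k]
    congr 1
    ext i
    rw [← hg', map_intCast]
  · rw [← Nat.cast_pow, ← ZMod.intCast_zmod_eq_zero_iff_dvd, ← hd k]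
    simp [dotProduct, hg', hd']

lemma card_filter_castHom_eq_zero_le {p r : ℕ} [Fact p.Prime] (hr : r ≠ 0) :
    (Finset.univ.filter fun z : ZMod (p ^ r) =>
      ZMod.castHom (dvd_pow_self p hr) (ZMod p) z = 0).card ≤ p ^ (r - 1) := by
  rw [← Finset.card_range (p ^ (r - 1))]
  have hdvd : ∀ z : ZMod (p ^ r), ZMod.castHom (dvd_pow_self p hr) (ZMod p) z = 0 → p ∣ z.val := by
    intro z hz
    rw [← ZMod.natCast_eq_zero_iff, ← hz]
    conv_rhs => rw [← ZMod.natCast_zmod_val z]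
    rw [map_natCast]
  refine Finset.card_le_card_of_injOn (fun z => z.val / p) ?_ ?_
  · intro z _
    rw [Finset.coe_range, Set.mem_Iio]
    refine Nat.div_lt_of_lt_mul ?_
    rw [← pow_succ', Nat.sub_add_cancel (Nat.pos_of_ne_zero hr)]
    exact ZMod.val_lt z
  · intro z hz w hw h
    simp only [Finset.coe_filter, Finset.mem_univ, true_and, Set.mem_ofPred_eq] at hz hw
    refine ZMod.val_injective _ ?_
    rw [← Nat.div_mul_cancel (hdvd z hz), ← Nat.div_mul_cancel (hdvd w hw)]
    simp only at h
    rw [h]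

open Matrix in
lemma card_le_of_dotProduct_eq_of_sub_eq {p r m : ℕ} [Fact p.Prime] (hr : r ≠ 0) {ι : Type*}
    [Fintype ι] (a : ι → Fin m → ZMod (p ^ r))
    (ha : LinearIndependent (ZMod p) fun i =>
      ZMod.castHom (dvd_pow_self p hr) (ZMod p) ∘ a i)
    (t : ι → ZMod (p ^ r)) (t₀ : ZMod (p ^ r)) (T : Finset (Fin m → ZMod (p ^ r)))
    (hT : ∀ x ∈ T, (∀ j, a j ⬝ᵥ x = t j) ∧ x ⬝ᵥ x = t₀ ∧
      ZMod.castHom (dvd_pow_self p hr) (ZMod p) ∘ x ∉ Submodule.span (ZMod p)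
        (Set.range fun i => ZMod.castHom (dvd_pow_self p hr) (ZMod p) ∘ a i))
    (hcl : ∀ x ∈ T, ∀ y ∈ T, ∃ z : Fin m → ZMod (p ^ r), x - y = (2 * p : ZMod (p ^ r)) • z) :
    T.card ≤ 2 ^ m * (p ^ (r - 1)) ^ (m - 1 - Fintype.card ι) := by
  classical
  set red := ZMod.castHom (dvd_pow_self p hr) (ZMod p) with hred
  have redp : ∀ z : ZMod (p ^ r), red (p * z) = 0 := fun z => by
    rw [map_mul, map_natCast, CharP.cast_eq_zero, zero_mul]
  rcases T.eq_empty_or_nonempty with rfl | ⟨u, hu⟩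
  · simp
  obtain ⟨e, he⟩ := exists_completion _ (linearIndependent_option'.2 ⟨ha, (hT u hu).2.2⟩)
  choose e' he' using fun k i => ZMod.castHom_surjective (dvd_pow_self p hr) (e k i)
  let f : (Fin m → ZMod (p ^ r)) → (Fin (m - Fintype.card (Option ι)) → ZMod (p ^ r)) :=
    fun x k => e' k ⬝ᵥ (x - u)
  have hfiber : ∀ b ∈ T.image f, (T.filter fun x => f x = b).card ≤ 2 ^ m := by
    intro b hb
    obtain ⟨y, hy, rfl⟩ := Finset.mem_image.1 hb
    have hcard := Finset.card_le_card_of_injOn (s := T.filter fun x => f x = f y)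
      (t := Fintype.piFinset fun _ : Fin m =>
        Finset.univ.filter fun z : ZMod (p ^ r) => 2 • z = 0) (fun x => x - y) ?_ ?_
    · refine hcard.trans ?_
      rw [Fintype.card_piFinset_const]
      exact Nat.pow_le_pow_left (IsAddCyclic.card_nsmul_eq_zero_le two_pos) _
    · intro x hx
      obtain ⟨hx, hxy⟩ := Finset.mem_filter.1 hx
      rw [Finset.mem_coe, Fintype.mem_piFinset]
      intro i
      rw [Finset.mem_filter]
      refine ⟨Finset.mem_univ _, ?_⟩
      obtain ⟨z, hz⟩ := hcl x hx y hy
      obtain ⟨w, hw⟩ := hcl y hy u hu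
      have hd : (2 : ZMod (p ^ r)) • (x - y) = 0 := by
        refine eq_zero_of_dotProduct (κ := Option ι ⊕ Fin (m - Fintype.card (Option ι)))
          (Fact.out : p.Prime).ne_zero hr
          (Sum.elim (fun o => Option.casesOn' o (y + (p : ZMod (p ^ r)) • z) a) e') ?_ _ ?_
        · intro v hv
          refine he v ?_ ?_
          · rintro (_ | j)
            · have h1 := hv (Sum.inl none)
              rw [← h1]
              show (red ∘ u) ⬝ᵥ v = _
              congr 1
              ext i
              have h2 := congrFun hw i
              simp only [Pi.sub_apply, Pi.smul_apply, smul_eq_mul] at h2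
              rw [sub_eq_iff_eq_add] at h2
              show red (u i) = red (y i + p * z i)
              rw [map_add, redp, h2, map_add, mul_comm 2, mul_assoc, redp, zero_add, add_zero]
            · exact hv (Sum.inl (some j))
          · intro k
            have h1 := hv (Sum.inr k)
            rw [← h1]
            congr 1
            ext i
            exact (he' k i).symm
        · rintro ((_ | j) | k)
          · show (y + (p : ZMod (p ^ r)) • z) ⬝ᵥ ((2 : ZMod (p ^ r)) • (x - y)) = 0
            have h1 : x ⬝ᵥ x = y ⬝ᵥ y := (hT x hx).2.1.trans (hT y hy).2.1.symm
            have h2 : x = y + (2 * p : ZMod (p ^ r)) • z := by rw [← hz]; abel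
            rw [hz]
            rw [h2] at h1
            simp only [add_dotProduct, dotProduct_add, smul_dotProduct, dotProduct_smul,
              smul_eq_mul] at h1 ⊢
            rw [dotProduct_comm z y] at h1
            linear_combination h1
          · show a j ⬝ᵥ ((2 : ZMod (p ^ r)) • (x - y)) = 0
            rw [dotProduct_smul, dotProduct_sub, (hT x hx).1, (hT y hy).1, sub_self, smul_zero]
          · show e' k ⬝ᵥ ((2 : ZMod (p ^ r)) • (x - y)) = 0
            have := congrFun hxy k
            simp only [f, dotProduct_sub] at this
            rw [dotProduct_smul, dotProduct_sub, sub_left_inj.1 this, sub_self, smul_zero]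
      have := congrFun hd i
      simpa [two_mul, two_nsmul] using this
    · intro x _ x' _ h
      exact sub_left_injective h
  refine (Finset.card_le_mul_card_image _ _ hfiber).trans (Nat.mul_le_mul_left _ ?_)
  refine (Finset.card_le_card (t := Fintype.piFinset fun _ =>
    Finset.univ.filter fun z : ZMod (p ^ r) => red z = 0) ?_).trans ?_
  · intro b hb
    obtain ⟨y, hy, rfl⟩ := Finset.mem_image.1 hb
    rw [Fintype.mem_piFinset]
    intro k
    rw [Finset.mem_filter]
    refine ⟨Finset.mem_univ _, ?_⟩
    obtain ⟨w, hw⟩ := hcl y hy u hu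
    simp only [f, hw, dotProduct_smul, smul_eq_mul]
    rw [mul_comm 2, mul_assoc, redp]
  · rw [Fintype.card_piFinset_const, Fintype.card_option,
      show m - 1 - Fintype.card ι = m - (Fintype.card ι + 1) by omega]
    exact Nat.pow_le_pow_left (card_filter_castHom_eq_zero_le hr) _

lemma exists_eq_two_mul_of_castHom_eq_zero {p r : ℕ} [Fact p.Prime] (h2 : p ≠ 2) (hr : r ≠ 0)
    (z : ZMod (p ^ r)) (hz : ZMod.castHom (dvd_pow_self p hr) (ZMod p) z = 0) :
    ∃ w, z = (2 * p : ZMod (p ^ r)) * w := by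
  have hdvd : p ∣ z.val := by
    rw [← ZMod.natCast_eq_zero_iff, ← hz]
    conv_rhs => rw [← ZMod.natCast_zmod_val z]
    rw [map_natCast]
  obtain ⟨c, hc⟩ := hdvd
  obtain ⟨k, hk⟩ := ((Fact.out : p.Prime).odd_of_ne_two h2).pow (n := r)
  have h1 : (2 * (k + 1) : ZMod (p ^ r)) = 1 := by
    have : ((2 * k + 1 : ℕ) : ZMod (p ^ r)) = 0 := by rw [← hk]; exact CharP.cast_eq_zero _ _
    push_cast at this
    linear_combination this
  refine ⟨(k + 1) * c, ?_⟩
  rw [← ZMod.natCast_zmod_val z, hc]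
  push_cast
  linear_combination (-(p : ZMod (p ^ r)) * c) * h1

open Matrix in
lemma card_le_of_dotProduct_eq {p r m : ℕ} [Fact p.Prime] (hr : r ≠ 0) {ι : Type*}
    [Fintype ι] (a : ι → Fin m → ZMod (p ^ r))
    (ha : LinearIndependent (ZMod p) fun i =>
      ZMod.castHom (dvd_pow_self p hr) (ZMod p) ∘ a i)
    (t : ι → ZMod (p ^ r)) (t₀ : ZMod (p ^ r)) (T : Finset (Fin m → ZMod (p ^ r)))
    (hT : ∀ x ∈ T, (∀ j, a j ⬝ᵥ x = t j) ∧ x ⬝ᵥ x = t₀ ∧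
      ZMod.castHom (dvd_pow_self p hr) (ZMod p) ∘ x ∉ Submodule.span (ZMod p)
        (Set.range fun i => ZMod.castHom (dvd_pow_self p hr) (ZMod p) ∘ a i)) :
    T.card ≤ 8 ^ m * (p ^ r) ^ (m - 1 - Fintype.card ι) := by
  classical
  have hp : p.Prime := Fact.out
  rcases T.eq_empty_or_nonempty with rfl | ⟨u, hu⟩
  · simp
  have hk : Fintype.card ι + 1 ≤ m := by
    have := (linearIndependent_option'.2 ⟨ha, (hT u hu).2.2⟩).fintype_card_le_finrank
    rwa [Fintype.card_option, Module.finrank_fin_fun] at this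
  by_cases h2 : p = 2
  · subst h2
    refine (Finset.card_le_mul_card_image (f := fun x i => (x i).val % 4) T
      (2 ^ m * (2 ^ (r - 1)) ^ (m - 1 - Fintype.card ι)) fun b hb => ?_).trans ?_
    · refine card_le_of_dotProduct_eq_of_sub_eq hr a ha t t₀ _
        (fun x hx => hT x (Finset.mem_filter.1 hx).1) fun x hx y hy => ?_
      have h : ∀ i, ∃ z, x i - y i = (2 * (2 : ℕ) : ZMod (2 ^ r)) * z := fun i => by
        have h1 := congrFun ((Finset.mem_filter.1 hx).2.trans (Finset.mem_filter.1 hy).2.symm) i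
        refine ⟨((x i).val / 4 : ℕ) - ((y i).val / 4 : ℕ), ?_⟩
        conv_lhs => rw [← ZMod.natCast_zmod_val (x i), ← ZMod.natCast_zmod_val (y i),
          ← Nat.div_add_mod (x i).val 4, ← Nat.div_add_mod (y i).val 4, h1]
        push_cast
        ring
      choose z hz using h
      exact ⟨z, funext hz⟩
    · have : (T.image fun x i => (x i).val % 4).card ≤ 4 ^ m := by
        refine (Finset.card_le_card (t := Fintype.piFinset fun _ => Finset.range 4) ?_).trans ?_
        · intro b hb
          obtain ⟨x, -, rfl⟩ := Finset.mem_image.1 hb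
          exact Fintype.mem_piFinset.2 fun i => Finset.mem_range.2 (Nat.mod_lt _ (by norm_num))
        · rw [Fintype.card_piFinset_const, Finset.card_range]
      calc _ ≤ 2 ^ m * (2 ^ r) ^ (m - 1 - Fintype.card ι) * 4 ^ m := by
            gcongr
            · norm_num
            · omega
        _ = _ := by rw [show (8 : ℕ) = 2 * 4 by norm_num, mul_pow]; ring
  · have h2' : (2 : ZMod p) ≠ 0 := by
      intro h
      have : ((2 : ℕ) : ZMod p) = 0 := by exact_mod_cast h
      rw [ZMod.natCast_eq_zero_iff] at this
      exact h2 ((Nat.prime_dvd_prime_iff_eq hp Nat.prime_two).1 this)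
    have hcard := card_mul_card_le_of_dotProduct_eq h2' _ ha
      (fun j => ZMod.castHom (dvd_pow_self p hr) (ZMod p) (t j))
      (ZMod.castHom (dvd_pow_self p hr) (ZMod p) t₀)
      (T.image fun x => ZMod.castHom (dvd_pow_self p hr) (ZMod p) ∘ x) ?_
    · refine (Finset.card_le_mul_card_image
        (f := fun x => ZMod.castHom (dvd_pow_self p hr) (ZMod p) ∘ x) T
        (2 ^ m * (p ^ (r - 1)) ^ (m - 1 - Fintype.card ι)) fun b hb => ?_).trans ?_
      · refine card_le_of_dotProduct_eq_of_sub_eq hr a ha t t₀ _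
          (fun x hx => hT x (Finset.mem_filter.1 hx).1) fun x hx y hy => ?_
        have h : ∀ i, ∃ z, x i - y i = (2 * p : ZMod (p ^ r)) * z := fun i => by
          have h1 := congrFun ((Finset.mem_filter.1 hx).2.trans (Finset.mem_filter.1 hy).2.symm) i
          refine exists_eq_two_mul_of_castHom_eq_zero h2 hr _ ?_
          rw [map_sub, sub_eq_zero]
          exact h1
        choose z hz using h
        exact ⟨z, funext hz⟩
      · rw [ZMod.card, show m - Fintype.card ι = m - 1 - Fintype.card ι + 1 by omega, pow_succ,
          ← mul_assoc] at hcard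
        have h3 := Nat.le_of_mul_le_mul_right hcard hp.pos
        calc _ ≤ 2 ^ m * (p ^ (r - 1)) ^ (m - 1 - Fintype.card ι) *
                (2 * p ^ (m - 1 - Fintype.card ι)) := Nat.mul_le_mul_left _ h3
          _ = 2 ^ m * 2 * (p ^ (r - 1) * p) ^ (m - 1 - Fintype.card ι) := by rw [mul_pow]; ring
          _ ≤ _ := by
            rw [← pow_succ p, Nat.sub_add_cancel (Nat.pos_of_ne_zero hr),
              show (8 : ℕ) = 2 * 4 by norm_num, mul_pow]
            gcongr
            calc 2 ≤ 4 ^ 1 := by norm_num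
              _ ≤ 4 ^ m := Nat.pow_le_pow_right (by norm_num) (by omega)
    · intro b hb
      obtain ⟨x, hx, rfl⟩ := Finset.mem_image.1 hb
      obtain ⟨h1, h3, h4⟩ := hT x hx
      refine ⟨fun j => ?_, ?_, h4⟩
      · rw [← RingHom.map_dotProduct, h1]
      · rw [← RingHom.map_dotProduct, h3]

open Matrix in
lemma card_primitive_gram_le {p r m n : ℕ} [Fact p.Prime] (hr : r ≠ 0)
    (Z : Matrix (Fin n) (Fin n) (ZMod (p ^ r))) (S : Finset (Matrix (Fin m) (Fin n) (ZMod (p ^ r))))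
    (hS : ∀ U ∈ S, Uᵀ * U = Z ∧ LinearIndependent (ZMod p) fun i =>
      ZMod.castHom (dvd_pow_self p hr) (ZMod p) ∘ Uᵀ i) :
    S.card ≤ (8 ^ m) ^ n * (p ^ r) ^ ∑ i : Fin n, (m - 1 - i) := by
  rw [← Finset.card_image_of_injective S (f := (transpose : _ → Fin n → Fin m → ZMod (p ^ r)))
    transpose_injective]
  have key := card_le_prod_of_card_fiber_le
    (S.image (transpose : _ → Fin n → Fin m → ZMod (p ^ r)))
    (fun i => ((8 ^ m * (p ^ r) ^ (m - 1 - (i : ℕ)) : ℕ) : ℝ≥0∞)) ?_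
  · rw [← Nat.cast_prod, Nat.cast_le] at key
    refine key.trans_eq ?_
    rw [Finset.prod_mul_distrib, Finset.prod_const, Finset.card_univ, Fintype.card_fin,
      Finset.prod_pow_eq_pow_sum]
  · intro f hf i
    rw [Nat.cast_le]
    obtain ⟨U, hU, hUf⟩ := Finset.mem_image.1 hf
    refine (card_le_of_dotProduct_eq hr (fun j : Fin i => Uᵀ (Fin.castLE i.2.le j))
      ((hS U hU).2.comp _ (Fin.castLE_injective i.2.le))
      (fun j => Z (Fin.castLE i.2.le j) i) (Z i i) _ ?_).trans_eq
      (by rw [Fintype.card_fin])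
    · intro x hx
      obtain ⟨g, hg, rfl⟩ := Finset.mem_image.1 hx
      obtain ⟨hgS, hgU⟩ := (@Finset.mem_filter _ _ (_) _ _).1 hg
      subst hUf
      obtain ⟨V, hV, rfl⟩ := Finset.mem_image.1 hgS
      have hlt : ∀ j : Fin i, Fin.castLE i.2.le j < i := fun j => j.2
      refine ⟨fun j => ?_, ?_, ?_⟩
      · rw [← hgU _ (hlt j), ← (hS V hV).1]
        rfl
      · rw [← (hS V hV).1]
        rfl
      · have := (hS V hV).2.notMem_span_image (s := Set.Iio i) (x := i) (by simp)
        refine fun h => this (Submodule.span_mono ?_ h)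
        rintro _ ⟨j, rfl⟩
        exact ⟨Fin.castLE i.2.le j, hlt j, by simp only [hgU _ (hlt j)]⟩

lemma sum_ite_le_add (n : ℕ) (l : Fin n → ℕ) :
    ∑ b, ∑ a, (if a ≤ b then l a + l b else 0) = (n + 1) * ∑ i, l i := by
  have h1 : ∑ b, ∑ a, (if a ≤ b then l a + l b else 0) =
      ∑ b, ∑ a, (if b ≤ a then l a + l b else 0) := by
    rw [Finset.sum_comm]
    simp only [add_comm]
  have h2 : ∑ b, ∑ a, (if a ≤ b then l a + l b else 0) +
      ∑ b, ∑ a, (if b ≤ a then l a + l b else 0) =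
      ∑ b : Fin n, ∑ a : Fin n, (l a + l b + if a = b then l a + l b else 0) := by
    simp only [← Finset.sum_add_distrib]
    refine Finset.sum_congr rfl fun b _ => Finset.sum_congr rfl fun a _ => ?_
    rcases lt_trichotomy a b with h | rfl | h
    · simp [h.le, h.not_ge, h.ne]
    · simp
    · simp [h.le, h.not_ge, h.ne']
  rw [← h1] at h2
  simp [Finset.sum_add_distrib, Finset.sum_const, ← Finset.mul_sum] at h2
  linarith

lemma card_le_of_pow_mul_sub_eq_zero {p r : ℕ} [Fact p.Prime] (k : ℕ) (X : Finset (ZMod (p ^ r)))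
    (hX : ∀ x ∈ X, ∀ y ∈ X, (p ^ k : ZMod (p ^ r)) * (x - y) = 0) : X.card ≤ p ^ k := by
  classical
  rcases X.eq_empty_or_nonempty with rfl | ⟨y, hy⟩
  · simp
  refine le_trans ?_ (IsAddCyclic.card_nsmul_eq_zero_le (α := ZMod (p ^ r))
    (pow_pos (Fact.out : p.Prime).pos k))
  refine Finset.card_le_card_of_injOn (fun x => x - y) (fun x hx => ?_) fun x _ x' _ h =>
    sub_left_injective h
  simpa using hX x hx y hy

open Matrix in
lemma card_symm_congruent_le {p r n : ℕ} [Fact p.Prime] {l : Fin n → ℕ}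
    {H : Matrix (Fin n) (Fin n) ℤ} (hH : IsHermiteForm p l H)
    (Λ : Matrix (Fin n) (Fin n) (ZMod (p ^ r))) (S : Finset (Matrix (Fin n) (Fin n) (ZMod (p ^ r))))
    (hS : ∀ Z ∈ S, Zᵀ = Z ∧ (H.map (Int.cast : ℤ → ZMod (p ^ r)))ᵀ * Z *
      H.map (Int.cast : ℤ → ZMod (p ^ r)) = Λ) :
    S.card ≤ p ^ ((n + 1) * ∑ i, l i) := by
  let c : Matrix (Fin n) (Fin n) (ZMod (p ^ r)) → (Fin n ×ₗ Fin n) → ZMod (p ^ r) :=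
    fun Z x => if (ofLex x).2 ≤ (ofLex x).1 then Z (ofLex x).2 (ofLex x).1 else 0
  have hc : Set.InjOn c S := by
    intro Z hZ Z' hZ' h
    have h1 : ∀ a b, a ≤ b → Z a b = Z' a b := fun a b hab => by
      have := congrFun h (toLex (b, a))
      simpa [c, hab] using this
    ext a b
    rcases le_total a b with hab | hab
    · exact h1 a b hab
    · rw [← (hS Z hZ).1, ← (hS Z' hZ').1]
      exact h1 b a hab
  rw [← Finset.card_image_of_injOn hc]
  have key := card_le_prod_of_card_fiber_le (S.image c)
    (fun x => ((p ^ (if (ofLex x).2 ≤ (ofLex x).1 then l (ofLex x).2 + l (ofLex x).1 else 0) : ℕ) :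
      ℝ≥0∞)) ?_
  · rw [← Nat.cast_prod, Nat.cast_le] at key
    refine key.trans_eq ?_
    rw [Finset.prod_pow_eq_pow_sum, ← sum_ite_le_add, ← Fintype.sum_prod_type']
    congr 1
  · intro f hf x
    rw [Nat.cast_le]
    refine card_le_of_pow_mul_sub_eq_zero _ _ ?_
    intro y hy y' hy'
    obtain ⟨g, hg, rfl⟩ := Finset.mem_image.1 hy
    obtain ⟨g', hg', rfl⟩ := Finset.mem_image.1 hy'
    obtain ⟨hg, hgf⟩ := Finset.mem_filter.1 hg
    obtain ⟨hg', hgf'⟩ := Finset.mem_filter.1 hg'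
    obtain ⟨Z, hZ, rfl⟩ := Finset.mem_image.1 hg
    obtain ⟨Z', hZ', rfl⟩ := Finset.mem_image.1 hg'
    obtain ⟨b, a⟩ := x
    show (p ^ (if a ≤ b then l a + l b else 0) : ZMod (p ^ r)) *
      ((if a ≤ b then Z a b else 0) - (if a ≤ b then Z' a b else 0)) = 0
    split_ifs with hab
    swap
    · simp
    have hagree : ∀ c' d, c' ≤ d → (d < b ∨ d = b ∧ c' < a) → Z c' d = Z' c' d := by
      intro c' d hcd hlt
      have hlt' : toLex (d, c') < toLex (b, a) := by
        rw [Prod.Lex.toLex_lt_toLex]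
        exact hlt
      have := (hgf _ hlt').trans (hgf' _ hlt').symm
      simpa [c, hcd] using this
    have hzero : ∀ c' d, c' ≤ a → d ≤ b → (c', d) ≠ (a, b) → (Z - Z') c' d = 0 := by
      intro c' d hc' hd hne
      rw [Matrix.sub_apply, sub_eq_zero]
      rcases le_or_gt c' d with hcd | hcd
      · refine hagree c' d hcd ?_
        rcases hd.lt_or_eq with h | rfl
        · exact Or.inl h
        · exact Or.inr ⟨rfl, lt_of_le_of_ne hc' fun h => hne (by rw [h])⟩
      · rw [← (hS Z hZ).1, ← (hS Z' hZ').1]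
        refine hagree d c' hcd.le ?_
        rcases (hc'.trans hab).lt_or_eq with h | h
        · exact Or.inl h
        · exact Or.inr ⟨h, hcd.trans_le hc'⟩
    have hdiff : ((H.map (Int.cast : ℤ → ZMod (p ^ r)))ᵀ * (Z - Z') *
        H.map (Int.cast : ℤ → ZMod (p ^ r))) a b = 0 := by
      rw [Matrix.mul_sub, Matrix.sub_mul, (hS Z hZ).2, (hS Z' hZ').2, sub_self]
      rfl
    simp only [Matrix.mul_apply, Matrix.transpose_apply, Matrix.map_apply, Finset.sum_mul] at hdiff
    rw [Finset.sum_eq_single b, Finset.sum_eq_single a] at hdiff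
    · rw [hH.diag, hH.diag, Matrix.sub_apply] at hdiff
      rw [← hdiff]
      push_cast
      ring
    · intro c' _ hc'
      rcases lt_or_ge a c' with h | h
      · rw [hH.upper c' a h]; simp
      · rw [hzero c' b h le_rfl (by simp [hc'])]; simp
    · simp
    · intro d _ hd
      refine Finset.sum_eq_zero fun c' _ => ?_
      rcases lt_or_ge b d with h | h
      · rw [hH.upper d b h]; simp
      · rcases lt_or_ge a c' with h' | h'
        · rw [hH.upper c' a h']; simp
        · rw [hzero c' d h' h (by simp [hd])]; simp
    · simp

lemma Matrix.map_intCast_mul {l m n R : Type*} [Fintype m] [Ring R] (A : Matrix l m ℤ)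
    (B : Matrix m n ℤ) :
    (A * B).map (Int.cast : ℤ → R) = A.map (Int.cast : ℤ → R) * B.map (Int.cast : ℤ → R) :=
  Matrix.map_mul (f := Int.castRingHom R)

open Matrix in
lemma IsHermiteForm.eq_of_sub_eq_vecMul {p n : ℕ} (hp : p.Prime) {l : Fin n → ℕ}
    {H : Matrix (Fin n) (Fin n) ℤ} (hH : IsHermiteForm p l H) {w w' : Fin n → ℕ}
    (hw : ∀ j, w j < p ^ l j) (hw' : ∀ j, w' j < p ^ l j) (y : Fin n → ℤ)
    (h : ∀ j, (w j : ℤ) - w' j = (y ᵥ* H) j) : w = w' := by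
  have hy : ∀ j, y j = 0 := by
    intro j
    induction j using WellFoundedLT.induction with
    | ind j ih =>
      have h1 := h j
      rw [vecMul, dotProduct, Finset.sum_eq_single j, hH.diag] at h1
      · have hpos : (0 : ℤ) < (p : ℤ) ^ l j := pow_pos (by exact_mod_cast hp.pos) _
        have h2 : (w j : ℤ) < (p : ℤ) ^ l j := by exact_mod_cast hw j
        have h3 : (w' j : ℤ) < (p : ℤ) ^ l j := by exact_mod_cast hw' j
        have h4 : y j * (p : ℤ) ^ l j = 0 := by
          refine Int.eq_zero_of_abs_lt_dvd (dvd_mul_left _ _) ?_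
          rw [← h1, abs_lt]
          constructor <;> omega
        exact (mul_eq_zero.1 h4).resolve_right hpos.ne'
      · intro k _ hk
        rcases lt_or_gt_of_ne hk with hk | hk
        · rw [ih k hk, zero_mul]
        · rw [hH.upper k j hk, mul_zero]
      · simp
  obtain rfl : y = 0 := funext hy
  ext j
  have := h j
  rw [zero_vecMul, Pi.zero_apply] at this
  omega

open Matrix in
lemma card_mul_pow_le {p r m n : ℕ} [Fact p.Prime] {l : Fin n → ℕ}
    {H : Matrix (Fin n) (Fin n) ℤ} (hH : IsHermiteForm p l H) (hr : r ≠ 0) (hlr : ∑ i, l i < r)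
    (Λ : Matrix (Fin n) (Fin n) (ZMod (p ^ r)))
    (S : Finset (Matrix (Fin m) (Fin n) (ZMod (p ^ r))))
    (hS : ∀ L ∈ S, Lᵀ * L = Λ ∧ ∃ U : Matrix (Fin m) (Fin n) (ZMod (p ^ r)),
      U * H.map (Int.cast : ℤ → ZMod (p ^ r)) = L ∧ LinearIndependent (ZMod p) fun i =>
        ZMod.castHom (dvd_pow_self p hr) (ZMod p) ∘ Uᵀ i) :
    S.card * p ^ (m * ∑ i, l i) ≤
      ((8 ^ m) ^ n * (p ^ r) ^ ∑ i : Fin n, (m - 1 - i)) * p ^ ((n + 1) * ∑ i, l i) := by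
  classical
  have hp : p.Prime := Fact.out
  set s := ∑ i, l i with hs
  set H' := H.map (Int.cast : ℤ → ZMod (p ^ r)) with hH'
  let V : Finset (Matrix (Fin m) (Fin n) (ZMod (p ^ r))) := Finset.univ.filter fun U =>
    (U * H')ᵀ * (U * H') = Λ ∧ LinearIndependent (ZMod p) fun i =>
        ZMod.castHom (dvd_pow_self p hr) (ZMod p) ∘ Uᵀ i
  have hV : V.card ≤ ((8 ^ m) ^ n * (p ^ r) ^ ∑ i : Fin n, (m - 1 - i)) * p ^ ((n + 1) * s) := by
    refine (Finset.card_le_mul_card_image (f := fun U => Uᵀ * U) V _ fun Z hZ =>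
      card_primitive_gram_le hr Z _ fun U hU => ?_).trans (Nat.mul_le_mul_left _ ?_)
    · obtain ⟨hU, hUZ⟩ := Finset.mem_filter.1 hU
      exact ⟨hUZ, (Finset.mem_filter.1 hU).2.2⟩
    · refine card_symm_congruent_le hH Λ _ fun Z hZ => ?_
      obtain ⟨U, hU, rfl⟩ := Finset.mem_image.1 hZ
      refine ⟨by rw [transpose_mul, transpose_transpose], ?_⟩
      rw [← (Finset.mem_filter.1 hU).2.1, transpose_mul]
      simp only [Matrix.mul_assoc, ← hH']
  refine le_trans ?_ hV
  have hUex : ∀ L : Matrix (Fin m) (Fin n) (ZMod (p ^ r)), ∃ U : Matrix (Fin m) (Fin n) (ZMod (p ^ r)),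
      L ∈ S → U * H' = L ∧ LinearIndependent (ZMod p) fun i =>
        ZMod.castHom (dvd_pow_self p hr) (ZMod p) ∘ Uᵀ i := by
    intro L
    by_cases h : L ∈ S
    · obtain ⟨U, hU⟩ := (hS L h).2
      exact ⟨U, fun _ => hU⟩
    · exact ⟨0, fun h' => absurd h' h⟩
  choose U hU using hUex
  let W : Finset (Fin m → Fin n → ℕ) :=
    Fintype.piFinset fun _ => Fintype.piFinset fun j => Finset.range (p ^ l j)
  have hW : W.card = p ^ (m * s) := by
    rw [Fintype.card_piFinset_const, Fintype.card_piFinset]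
    simp only [Finset.card_range]
    rw [Finset.prod_pow_eq_pow_sum, ← pow_mul, mul_comm]
  have hWlt : ∀ w ∈ W, ∀ i j, w i j < p ^ l j := fun w hw i j =>
    Finset.mem_range.1 (Fintype.mem_piFinset.1 (Fintype.mem_piFinset.1 hw i) j)
  rw [← hW, ← Finset.card_product]
  let Q : (Fin m → Fin n → ℕ) → Matrix (Fin m) (Fin n) ℤ := fun w =>
    (Matrix.of fun i j => (w i j : ℤ)) * H.adjugate
  let f : Matrix (Fin m) (Fin n) (ZMod (p ^ r)) × (Fin m → Fin n → ℕ) →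
      Matrix (Fin m) (Fin n) (ZMod (p ^ r)) := fun x =>
    U x.1 + (((p : ℤ) ^ (r - s)) • Q x.2).map (Int.cast : ℤ → ZMod (p ^ r))
  have hadj : ∀ w, Q w * H = (p : ℤ) ^ s • Matrix.of fun i j => (w i j : ℤ) := fun w => by
    rw [Matrix.mul_assoc, Matrix.adjugate_mul, hH.det_eq, Matrix.mul_smul, Matrix.mul_one]
  have hf : ∀ x, x.1 ∈ S → f x * H' = x.1 := by
    intro x hx
    rw [Matrix.add_mul, (hU _ hx).1, hH', ← Matrix.map_intCast_mul, Matrix.smul_mul, hadj, smul_smul,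
      ← pow_add, Nat.sub_add_cancel hlr.le]
    ext i j
    have : ((p : ZMod (p ^ r)) ^ r) = 0 := by exact_mod_cast CharP.cast_eq_zero (ZMod (p ^ r)) (p ^ r)
    simp [this]
  refine Finset.card_le_card_of_injOn f ?_ ?_
  · intro x hx
    have hx1 := (Finset.mem_product.1 hx).1
    refine Finset.mem_filter.2 ⟨Finset.mem_univ _, ?_, ?_⟩
    · rw [hf x hx1, (hS _ hx1).1]
    · convert (hU _ hx1).2 using 2 with i
      ext k
      have : (p : ZMod p) ^ (r - s) = 0 := by
        rw [CharP.cast_eq_zero, zero_pow (by omega)]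
      show ZMod.castHom _ _ (U x.1 k i + (((p : ℤ) ^ (r - s) * Q x.2 k i : ℤ) : ZMod (p ^ r))) = _
      rw [map_add, map_intCast, Int.cast_mul, Int.cast_pow, Int.cast_natCast, this, zero_mul,
        add_zero]
      rfl
  · intro x hx x' hx' h
    have hx1 := Finset.mem_product.1 hx
    have hx1' := Finset.mem_product.1 hx'
    have h1 : x.1 = x'.1 := by rw [← hf x hx1.1, ← hf x' hx1'.1, h]
    refine Prod.ext h1 ?_
    simp only [f, h1] at h
    have h2 := add_left_cancel h
    have h3 : ∀ i j, (p : ℤ) ^ s ∣ Q x.2 i j - Q x'.2 i j := by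
      intro i j
      have h4 := congrFun (congrFun h2 i) j
      simp only [Matrix.map_apply, Matrix.smul_apply, smul_eq_mul] at h4
      rw [← sub_eq_zero, ← Int.cast_sub, ZMod.intCast_zmod_eq_zero_iff_dvd, ← mul_sub,
        Nat.cast_pow] at h4
      have h5 : (p : ℤ) ^ (r - s) * p ^ s = p ^ r := by rw [← pow_add, Nat.sub_add_cancel hlr.le]
      exact (mul_dvd_mul_iff_left (pow_ne_zero _ (by exact_mod_cast hp.ne_zero))).1
        ((dvd_of_eq h5).trans h4)
    choose y hy using h3
    funext i
    refine hH.eq_of_sub_eq_vecMul hp (hWlt _ hx1.2 i) (hWlt _ hx1'.2 i) (y i) fun j => ?_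
    have h5 : (p : ℤ) ^ s * ((x.2 i j : ℤ) - x'.2 i j) = (p : ℤ) ^ s * (y i ᵥ* H) j := by
      have e1 := congrFun (congrFun (hadj x.2) i) j
      have e2 := congrFun (congrFun (hadj x'.2) i) j
      simp only [Matrix.smul_apply, Matrix.of_apply, smul_eq_mul] at e1 e2
      rw [mul_sub, ← e1, ← e2, Matrix.mul_apply, Matrix.mul_apply, ← Finset.sum_sub_distrib,
        vecMul, dotProduct, Finset.mul_sum]
      refine Finset.sum_congr rfl fun k _ => ?_
      rw [← sub_mul, hy, mul_assoc]
    exact mul_left_cancel₀ (pow_ne_zero _ (by exact_mod_cast hp.ne_zero)) h5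

open Matrix in
lemma exists_hermite_factorization_zmod {p n m r : ℕ} [Fact p.Prime]
    {Λ : Matrix (Fin n) (Fin n) ℤ} (hdet : Λ.det ≠ 0) (hr : r ≠ 0)
    (hvr : Λ.det.natAbs.factorization p < r) (L : Matrix (Fin m) (Fin n) (ZMod (p ^ r)))
    (hL : Lᵀ * L = Λ.map (Int.cast : ℤ → ZMod (p ^ r))) :
    ∃ (l : Fin n → ℕ) (H : Matrix (Fin n) (Fin n) ℤ),
      ∑ i, l i ≤ Λ.det.natAbs.factorization p ∧ IsHermiteForm p l H ∧ (∃ Y, Hᵀ * Y = Λ) ∧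
      ∃ U : Matrix (Fin m) (Fin n) (ZMod (p ^ r)),
        U * H.map (Int.cast : ℤ → ZMod (p ^ r)) = L ∧ LinearIndependent (ZMod p) fun i =>
          ZMod.castHom (dvd_pow_self p hr) (ZMod p) ∘ Uᵀ i := by
  have hp : p.Prime := Fact.out
  have hval : ∀ k, (p : ℤ) ^ k ∣ Λ.det ↔ k ≤ Λ.det.natAbs.factorization p := fun k => by
    rw [← Nat.cast_pow, Int.natCast_dvd,
      hp.pow_dvd_iff_le_factorization (Int.natAbs_ne_zero.2 hdet)]
  choose L' hL' using fun i j => ZMod.intCast_surjective (L i j)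
  obtain ⟨M, rfl⟩ : ∃ M : Matrix (Fin m) (Fin n) ℤ, M.map (Int.cast : ℤ → ZMod (p ^ r)) = L :=
    ⟨Matrix.of L', by ext i j; exact hL' i j⟩
  have hG : (Mᵀ * M).map (Int.cast : ℤ → ZMod (p ^ r)) = Λ.map (Int.cast : ℤ → ZMod (p ^ r)) := by
    rw [Matrix.map_intCast_mul, ← hL]
    rfl
  have hGdet : (p : ℤ) ^ r ∣ Λ.det - (Mᵀ * M).det := by
    rw [← Nat.cast_pow, ← ZMod.intCast_zmod_eq_zero_iff_dvd, Int.cast_sub, Int.cast_det,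
      Int.cast_det, sub_eq_zero]
    exact congrArg det hG.symm
  have hnd : ∀ k, (p : ℤ) ^ k ∣ (Mᵀ * M).det → k ≤ Λ.det.natAbs.factorization p := by
    intro k hk
    have h1 : k < r := by
      by_contra! h
      have := (dvd_iff_dvd_of_dvd_sub hGdet).2 ((pow_dvd_pow _ h).trans hk)
      exact absurd ((hval r).1 this) (not_le.2 hvr)
    exact (hval k).1 ((dvd_iff_dvd_of_dvd_sub ((pow_dvd_pow _ h1.le).trans hGdet)).2 hk)
  have hG0 : (Mᵀ * M).det ≠ 0 := fun h => by
    have := hnd r (by rw [h]; exact dvd_zero _)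
    omega
  obtain ⟨l, U, H, hH, rfl, hU⟩ := exists_hermite_factorization (p := p) M hG0
  have hsum : ∑ i, l i ≤ Λ.det.natAbs.factorization p := by
    refine hnd _ ?_
    rw [transpose_mul, Matrix.mul_assoc, det_mul, det_transpose, hH.det_eq]
    exact dvd_mul_right _ _
  refine ⟨l, H, hsum, hH, ?_, U.map (Int.cast : ℤ → ZMod (p ^ r)), ?_, ?_⟩
  · have hE : ∀ i j, ∃ e, Λ i j - ((U * H)ᵀ * (U * H)) i j = (p : ℤ) ^ r * e := fun i j => by
      have h1 := congrFun (congrFun hG i) j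
      rw [← dvd_def, ← Nat.cast_pow, ← ZMod.intCast_zmod_eq_zero_iff_dvd, Int.cast_sub, sub_eq_zero]
      exact h1.symm
    choose e he using hE
    refine ⟨Uᵀ * (U * H) + (p : ℤ) ^ (r - ∑ i, l i) • (Hᵀ.adjugate * Matrix.of e), ?_⟩
    rw [Matrix.mul_add, ← Matrix.mul_assoc, ← transpose_mul, Matrix.mul_smul,
      ← Matrix.mul_assoc Hᵀ Hᵀ.adjugate, Matrix.mul_adjugate, det_transpose, hH.det_eq,
      Matrix.smul_mul, Matrix.one_mul, smul_smul,
      ← pow_add, Nat.sub_add_cancel (hsum.trans hvr.le)]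
    ext i j
    rw [Matrix.add_apply, Matrix.smul_apply, smul_eq_mul, Matrix.of_apply, ← he]
    ring
  · rw [Matrix.map_intCast_mul]
  · convert hU using 2 with i
    ext k
    exact map_intCast _ _

open Matrix in
lemma card_gram_eq_le {p n r : ℕ} (hp : p.Prime) {Λ : Matrix (Fin n) (Fin n) ℤ}
    (hdet : Λ.det ≠ 0) (hvr : Λ.det.natAbs.factorization p < r) :
    (Nat.card {L : Matrix (Fin (n + 1)) (Fin n) (ZMod (p ^ r)) //
      L.transpose * L = Λ.map (Int.cast : ℤ → ZMod (p ^ r))} : ℝ≥0∞) ≤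
      (8 ^ (n + 1)) ^ n * p ^ (r * ((n + 1) * n - n * (n + 1) / 2)) *
      ∑ l ∈ (Fintype.piFinset fun _ : Fin n =>
            Finset.range (Λ.det.natAbs.factorization p + 1)).filter
              (fun l => ∑ i, l i ≤ Λ.det.natAbs.factorization p),
          epow p (∑ i ∈ Finset.Icc 2 n, betaExp p n Λ l i) := by
  classical
  have : Fact p.Prime := ⟨hp⟩
  have hr : r ≠ 0 := by omega
  set v := Λ.det.natAbs.factorization p
  set D := (Fintype.piFinset fun _ : Fin n => Finset.range (v + 1)).filter
    (fun l => ∑ i, l i ≤ v)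
  let T : Finset (Matrix (Fin (n + 1)) (Fin n) (ZMod (p ^ r))) :=
    Finset.univ.filter fun L => Lᵀ * L = Λ.map (Int.cast : ℤ → ZMod (p ^ r))
  let P : (Fin n → ℕ) → Finset (Matrix (Fin n) (Fin n) ℤ) := fun l =>
    (IsHermiteForm.finite p l).toFinset.filter fun H => ∃ Y, Hᵀ * Y = Λ
  let R : Matrix (Fin n) (Fin n) ℤ → Finset (Matrix (Fin (n + 1)) (Fin n) (ZMod (p ^ r))) := fun H =>
    T.filter fun L => ∃ U : Matrix (Fin (n + 1)) (Fin n) (ZMod (p ^ r)),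
      U * H.map (Int.cast : ℤ → ZMod (p ^ r)) = L ∧ LinearIndependent (ZMod p) fun i =>
        ZMod.castHom (dvd_pow_self p hr) (ZMod p) ∘ Uᵀ i
  have hexp : ∑ i : Fin n, (n + 1 - 1 - (i : ℕ)) = (n + 1) * n - n * (n + 1) / 2 := by
    have h1 := Finset.sum_range_id_mul_two (n + 1)
    rw [Fin.sum_univ_eq_sum_range (fun i => n + 1 - 1 - i), ← Finset.sum_range_reflect]
    have h2 : ∑ j ∈ Finset.range n, (n + 1 - 1 - (n - 1 - j)) = ∑ j ∈ Finset.range n, (j + 1) :=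
      Finset.sum_congr rfl fun j hj => by have := Finset.mem_range.1 hj; omega
    rw [h2]
    rw [Finset.sum_range_succ', Nat.add_sub_cancel, add_zero] at h1
    have h3 : (n + 1) * n = n * (n + 1) := mul_comm _ _
    omega
  have hPR : ∀ l ∈ D, ∀ H ∈ P l,
      (R H).card ≤ (8 ^ (n + 1)) ^ n * p ^ (r * ((n + 1) * n - n * (n + 1) / 2)) := by
    intro l hl H hH
    have hH' : IsHermiteForm p l H := by
      simpa using (Finset.mem_filter.1 hH).1
    have hlv := (Finset.mem_filter.1 hl).2
    have := card_mul_pow_le hH' hr (hlv.trans_lt hvr) (Λ.map (Int.cast : ℤ → ZMod (p ^ r))) (R H)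
      fun L hL => ⟨(Finset.mem_filter.1 (Finset.mem_filter.1 hL).1).2, (Finset.mem_filter.1 hL).2⟩
    rw [hexp, ← pow_mul p] at this
    exact Nat.le_of_mul_le_mul_right this (pow_pos hp.pos _)
  have hT : T ⊆ D.biUnion fun l => (P l).biUnion R := by
    intro L hL
    obtain ⟨l, H, h1, h2, h3, h4⟩ :=
      exists_hermite_factorization_zmod hdet hr hvr L (Finset.mem_filter.1 hL).2
    refine Finset.mem_biUnion.2 ⟨l, Finset.mem_filter.2 ⟨Fintype.mem_piFinset.2 fun i => ?_, h1⟩,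
      Finset.mem_biUnion.2 ⟨H, Finset.mem_filter.2 ⟨by simpa using h2, h3⟩,
        Finset.mem_filter.2 ⟨hL, h4⟩⟩⟩
    exact Finset.mem_range.2 (Nat.lt_succ_of_le
      ((Finset.single_le_sum (fun _ _ => Nat.zero_le _) (Finset.mem_univ i)).trans h1))
  have hcard : T.card ≤
      ∑ l ∈ D, (P l).card * ((8 ^ (n + 1)) ^ n * p ^ (r * ((n + 1) * n - n * (n + 1) / 2))) := by
    refine (Finset.card_le_card hT).trans (Finset.card_biUnion_le.trans
      (Finset.sum_le_sum fun l hl => ?_))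
    exact Finset.card_biUnion_le_card_mul _ _ _ (hPR l hl)
  rw [Nat.card_eq_fintype_card, Fintype.card_subtype]
  calc (T.card : ℝ≥0∞) ≤ _ := Nat.cast_le.2 hcard
    _ = (8 ^ (n + 1)) ^ n * p ^ (r * ((n + 1) * n - n * (n + 1) / 2)) *
        ∑ l ∈ D, ((P l).card : ℝ≥0∞) := by
      push_cast
      rw [← Finset.sum_mul, mul_comm]
    _ ≤ _ := by
      gcongr with l hl
      exact card_hermiteForm_le hp _ fun H hH =>
        ⟨by simpa using (Finset.mem_filter.1 hH).1, (Finset.mem_filter.1 hH).2⟩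

open Matrix in
lemma det_ne_zero_of_posDef_int {n : ℕ} {Λ : Matrix (Fin n) (Fin n) ℤ} (h : Λ.PosDef) :
    Λ.det ≠ 0 := by
  intro h0
  obtain ⟨x, hx, hx0⟩ := exists_mulVec_eq_zero_iff.2 h0
  have := h.dotProduct_mulVec_pos hx
  rw [hx0, dotProduct_zero] at this
  exact lt_irrefl _ this

/-- For fixed `n ≥ 2` there is `C > 0`, independent of `p` and `Λ`, such that for every
prime `p` and every positive definite `Λ ∈ M_{n,n}(ℤ)` with `p ∣ det Λ`,
`ν_p(I_{n+1}, Λ) ≤ C · Σ p^{β₂(l) + ⋯ + β_n(l)}`, the sum over all tuples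
`(l₁,…,l_n)` of nonnegative integers with `l₁ + ⋯ + l_n ≤ o_p(det Λ)`. -/
theorem nu_bound_divisor (n : ℕ) (hn : 2 ≤ n) :
    ∃ C : ℝ, 0 < C ∧ ∀ (p : ℕ) (Λ : Matrix (Fin n) (Fin n) ℤ),
      p.Prime → Λ.PosDef → (p : ℤ) ∣ Λ.det →
      nuId p n Λ ≤ ENNReal.ofReal C *
        ∑ l ∈ (Fintype.piFinset fun _ : Fin n =>
            Finset.range (Λ.det.natAbs.factorization p + 1)).filter
              (fun l => ∑ i, l i ≤ Λ.det.natAbs.factorization p),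
          epow p (∑ i ∈ Finset.Icc 2 n, betaExp p n Λ l i) := by
  refine ⟨(8 ^ (n + 1)) ^ n, by positivity, fun p Λ hp hΛ _ => ?_⟩
  have hC : ENNReal.ofReal ((8 ^ (n + 1)) ^ n) = (8 ^ (n + 1)) ^ n := by
    rw [ENNReal.ofReal_pow (by positivity), ENNReal.ofReal_pow (by positivity),
      ENNReal.ofReal_ofNat]
  rw [hC]
  refine Filter.limsup_le_of_le (by isBoundedDefault) ?_
  filter_upwards [Filter.eventually_gt_atTop (Λ.det.natAbs.factorization p)] with r hr
  refine ENNReal.div_le_of_le_mul ((card_gram_eq_le hp (det_ne_zero_of_posDef_int hΛ) hr).trans_eq ?_)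
  ring
end
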